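/- arXiv:2412.00995 — 2 statements merged into one kernel-verified Lean document; each statement's English description precedes it below -/
import Mathlib

section
/- Let k ≥ 0 be an integer and p a prime. (1) If p is odd, f ∈ V(ℤ_p) is not ℚ_p-soluble, and there exists a ℚ_p-soluble f₀ ∈ V(ℤ_p) with f ≡ f₀ (mod p^{2k}V(ℤ_p)), then p^{2k+2} divides Δ(f). (2) If p = 2, f ∈ V(ℤ₂) is not ℚ₂-soluble, and there exists a ℚ₂-soluble f₀ ∈ V(ℤ₂) with f ≡ f₀ (mod 2^{2k+2}V(ℤ₂)), then 2^{2k+2} divides Δ(f). -/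
noncomputable section

namespace BQPaper

/-- A binary quartic form `a x⁴ + b x³y + c x²y² + d xy³ + e y⁴` over `R`,
recorded by its coefficients. -/
structure BQ (R : Type*) where
  a : R
  b : R
  c : R
  d : R
  e : R

/-- A 2×2 matrix `!![p, q; r, s]`, recorded by its entries. -/
structure Mat2 (R : Type*) where
  p : R
  q : R
  r : R
  s : R

variable {R S : Type*} [CommRing R] [CommRing S]

def Mat2.det (m : Mat2 R) : R := m.p * m.s - m.q * m.r

/-- Matrix product. -/
def Mat2.mul (m n : Mat2 R) : Mat2 R :=
  ⟨m.p * n.p + m.q * n.r, m.p * n.q + m.q * n.s,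
   m.r * n.p + m.s * n.r, m.r * n.q + m.s * n.s⟩

/-- Scalar multiple of a matrix. -/
def Mat2.smul (z : R) (m : Mat2 R) : Mat2 R := ⟨z * m.p, z * m.q, z * m.r, z * m.s⟩

def Mat2.map (φ : R →+* S) (m : Mat2 R) : Mat2 S := ⟨φ m.p, φ m.q, φ m.r, φ m.s⟩

/-- Evaluation of a binary quartic form at `(x, y)`. -/
def BQ.eval (f : BQ R) (x y : R) : R :=
  f.a * x ^ 4 + f.b * x ^ 3 * y + f.c * x ^ 2 * y ^ 2 + f.d * x * y ^ 3 + f.e * y ^ 4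

/-- The invariant `I(f) = 12ae − 3bd + c²`. -/
def BQ.invI (f : BQ R) : R := 12 * f.a * f.e - 3 * f.b * f.d + f.c ^ 2

/-- The invariant `J(f) = 72ace + 9bcd − 27ad² − 27eb² − 2c³`. -/
def BQ.invJ (f : BQ R) : R :=
  72 * f.a * f.c * f.e + 9 * f.b * f.c * f.d - 27 * f.a * f.d ^ 2
    - 27 * f.e * f.b ^ 2 - 2 * f.c ^ 3

/-- The discriminant of a binary quartic form; one has `Δ = (4I³ − J²)/27`. -/
def BQ.disc (f : BQ R) : R :=
  256 * f.a ^ 3 * f.e ^ 3 - 192 * f.a ^ 2 * f.b * f.d * f.e ^ 2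
    - 128 * f.a ^ 2 * f.c ^ 2 * f.e ^ 2 + 144 * f.a ^ 2 * f.c * f.d ^ 2 * f.e
    - 27 * f.a ^ 2 * f.d ^ 4 + 144 * f.a * f.b ^ 2 * f.c * f.e ^ 2
    - 6 * f.a * f.b ^ 2 * f.d ^ 2 * f.e - 80 * f.a * f.b * f.c ^ 2 * f.d * f.e
    + 18 * f.a * f.b * f.c * f.d ^ 3 + 16 * f.a * f.c ^ 4 * f.e
    - 4 * f.a * f.c ^ 3 * f.d ^ 2 - 27 * f.b ^ 4 * f.e ^ 2
    + 18 * f.b ^ 3 * f.c * f.d * f.e - 4 * f.b ^ 3 * f.d ^ 3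
    - 4 * f.b ^ 2 * f.c ^ 3 * f.e + f.b ^ 2 * f.c ^ 2 * f.d ^ 2

/-- Multiplication of all coefficients of a form by a scalar. -/
def BQ.rsmul (t : R) (f : BQ R) : BQ R := ⟨t * f.a, t * f.b, t * f.c, t * f.d, t * f.e⟩

/-- Substitution action of a 2×2 matrix on binary quartic forms:
`(m • f)(x,y) = f((x,y)·m) = f(px + ry, qx + sy)` for `m = !![p, q; r, s]`. -/
def BQ.subst (m : Mat2 R) (f : BQ R) : BQ R where
  a := f.a * m.p ^ 4 + f.b * m.p ^ 3 * m.q + f.c * m.p ^ 2 * m.q ^ 2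
      + f.d * m.p * m.q ^ 3 + f.e * m.q ^ 4
  b := 4 * f.a * m.p ^ 3 * m.r + f.b * m.p ^ 3 * m.s + 3 * f.b * m.p ^ 2 * m.q * m.r
      + 2 * f.c * m.p ^ 2 * m.q * m.s + 2 * f.c * m.p * m.q ^ 2 * m.r
      + 3 * f.d * m.p * m.q ^ 2 * m.s + f.d * m.q ^ 3 * m.r + 4 * f.e * m.q ^ 3 * m.s
  c := 6 * f.a * m.p ^ 2 * m.r ^ 2 + 3 * f.b * m.p ^ 2 * m.r * m.s
      + 3 * f.b * m.p * m.q * m.r ^ 2 + f.c * m.p ^ 2 * m.s ^ 2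
      + 4 * f.c * m.p * m.q * m.r * m.s + f.c * m.q ^ 2 * m.r ^ 2
      + 3 * f.d * m.p * m.q * m.s ^ 2 + 3 * f.d * m.q ^ 2 * m.r * m.s
      + 6 * f.e * m.q ^ 2 * m.s ^ 2
  d := 4 * f.a * m.p * m.r ^ 3 + 3 * f.b * m.p * m.r ^ 2 * m.s + f.b * m.q * m.r ^ 3
      + 2 * f.c * m.p * m.r * m.s ^ 2 + 2 * f.c * m.q * m.r ^ 2 * m.s
      + f.d * m.p * m.s ^ 3 + 3 * f.d * m.q * m.r * m.s ^ 2 + 4 * f.e * m.q * m.s ^ 3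
  e := f.a * m.r ^ 4 + f.b * m.r ^ 3 * m.s + f.c * m.r ^ 2 * m.s ^ 2
      + f.d * m.r * m.s ^ 3 + f.e * m.s ^ 4

/-- The twisted action `(γ·f)(x,y) = f((x,y)·γ)/det(γ)²`, which descends to `PGL₂`.
(`Ring.inverse` is the genuine inverse when `det` is a unit.) -/
def BQ.twist (m : Mat2 R) (f : BQ R) : BQ R :=
  BQ.rsmul (Ring.inverse m.det ^ 2) (f.subst m)

/-- Coefficientwise map of forms along a ring homomorphism. -/
def BQ.map (φ : R →+* S) (f : BQ R) : BQ S := ⟨φ f.a, φ f.b, φ f.c, φ f.d, φ f.e⟩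

end BQPaper

namespace BQPaper

variable {p : ℕ} [Fact p.Prime]

/-- A binary quartic form `f` over `ℤ_p` is `ℚ_p`-soluble if `z² = f(x,y)` has a
solution with `(x,y) ≠ (0,0)` in `ℚ_p`. -/
def SolubleP (f : BQ ℤ_[p]) : Prop :=
  ∃ x y z : ℚ_[p], ¬(x = 0 ∧ y = 0) ∧ z ^ 2 = (f.map (PadicInt.Coe.ringHom)).eval x y

/-- Coefficientwise congruence `f ≡ g (mod p^j V(ℤ_p))`. -/
def CongMod (j : ℕ) (f g : BQ ℤ_[p]) : Prop :=
  (p : ℤ_[p]) ^ j ∣ (f.a - g.a) ∧ (p : ℤ_[p]) ^ j ∣ (f.b - g.b) ∧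
  (p : ℤ_[p]) ^ j ∣ (f.c - g.c) ∧ (p : ℤ_[p]) ^ j ∣ (f.d - g.d) ∧
  (p : ℤ_[p]) ^ j ∣ (f.e - g.e)

/-!
If `f` is insoluble, Hensel's lemma shows that `f(t, 1) - w²` divides `(2w)²` and `(∂f/∂t)²` for all
`t` and `w`. Move a point where `f₀` is a square to `(1 : 0)`. Then `f.a` is congruent to a square
modulo `(2q)²`, where `q = p ^ k`, so these divisibilities force `q² ∣ f.a` and `q ∣ f.b`: thus `f`
is `(q²a, qb, c, d, e)`, a shape with a symmetry exchanging `x` and `y`. Its discriminant is `q²`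
times a quantity congruent to `c² (b² - 4ac) (d² - 4ce)` modulo `q`. When `p` is odd and divides
`q`, insolubility forbids smooth `𝔽_p`-points on `z² = cx² + dx + e`, whence `p ∣ d² - 4ce`, and
symmetrically `p ∣ b² - 4ac`. When `p = 2`, it forces `b` and `d` to be even. Either way the
discriminant gains a further factor `p²`.

When `p` is odd and `q = 1` there is no congruence to exploit, but the reduction of `f` takes no
nonzero square value. Either it has a root, which moved to `(1 : 0)` gives `p ∣ f.a`, `p ∣ f.b` and
again `p ∣ d² - 4ce`; or it takes only nonsquare values, and then counting points shows that it is a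
constant times the square of a quadratic form.
-/

section Invariants

variable {R S : Type*} [CommRing R] [CommRing S]

theorem BQ.eval_map (φ : R →+* S) (f : BQ R) (x y : R) :
    (f.map φ).eval (φ x) (φ y) = φ (f.eval x y) := by
  simp only [BQ.map, BQ.eval, map_add, map_mul, map_pow]

theorem BQ.eval_rsmul (t : R) (f : BQ R) (x y : R) : (f.rsmul t).eval x y = t * f.eval x y := by
  simp only [BQ.rsmul, BQ.eval]
  ring

theorem BQ.eval_subst (m : Mat2 R) (f : BQ R) (x y : R) :
    (f.subst m).eval x y = f.eval (m.p * x + m.r * y) (m.q * x + m.s * y) := by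
  simp only [BQ.subst, BQ.eval]
  ring

theorem BQ.map_subst (φ : R →+* S) (m : Mat2 R) (f : BQ R) :
    (f.subst m).map φ = (f.map φ).subst (m.map φ) := by
  simp only [BQ.subst, BQ.map, Mat2.map, map_add, map_mul, map_pow, map_ofNat]

theorem BQ.invI_subst (m : Mat2 R) (f : BQ R) : (f.subst m).invI = m.det ^ 4 * f.invI := by
  simp only [BQ.subst, BQ.invI, Mat2.det]
  ring

theorem BQ.invJ_subst (m : Mat2 R) (f : BQ R) : (f.subst m).invJ = m.det ^ 6 * f.invJ := by
  simp only [BQ.subst, BQ.invJ, Mat2.det]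
  ring

theorem BQ.disc_eq_invI_invJ (f : BQ R) : 27 * f.disc = 4 * f.invI ^ 3 - f.invJ ^ 2 := by
  simp only [BQ.disc, BQ.invI, BQ.invJ]
  ring

theorem BQ.disc_subst [IsDomain R] [CharZero R] (m : Mat2 R) (f : BQ R) :
    (f.subst m).disc = m.det ^ 12 * f.disc := by
  refine mul_left_cancel₀ (show (27 : R) ≠ 0 by norm_num) ?_
  rw [BQ.disc_eq_invI_invJ, BQ.invI_subst, BQ.invJ_subst]
  linear_combination -m.det ^ 12 * f.disc_eq_invI_invJ

theorem BQ.disc_subst_of_det_sq_eq_one [IsDomain R] [CharZero R] {m : Mat2 R}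
    (hm : m.det ^ 2 = 1) (f : BQ R) : (f.subst m).disc = f.disc := by
  rw [BQ.disc_subst, show m.det ^ 12 = (m.det ^ 2) ^ 6 by ring, hm, one_pow, one_mul]

/-- The form `f(y, x)`. -/
def BQ.reverse (f : BQ R) : BQ R := ⟨f.e, f.d, f.c, f.b, f.a⟩

theorem BQ.eval_reverse (f : BQ R) (x y : R) : f.reverse.eval x y = f.eval y x := by
  simp only [BQ.reverse, BQ.eval]
  ring

/-- The form `q²a x⁴ + qb x³y + c x²y² + d xy³ + e y⁴`. Every form with `q² ∣ a` and `q ∣ b` is of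
this shape, and for `q ≠ 0` it is `ℚ_p`-soluble exactly when the scaling of the reversed form is. -/
def BQ.scale (q : R) (f : BQ R) : BQ R := ⟨q ^ 2 * f.a, q * f.b, f.c, f.d, f.e⟩

theorem BQ.scale_one (f : BQ R) : f.scale 1 = f := by
  simp only [BQ.scale, one_pow, one_mul]

theorem BQ.scale_subst_antidiagonal (q : R) (f : BQ R) :
    (f.scale q).subst ⟨0, q, 1, 0⟩ = (f.reverse.scale q).rsmul (q ^ 2) := by
  simp only [BQ.subst, BQ.scale, BQ.reverse, BQ.rsmul, BQ.mk.injEq]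
  refine ⟨?_, ?_, ?_, ?_, ?_⟩ <;> ring

/-- Apart from the factor `q²`, the discriminant is congruent modulo `q` to `c²` times the
discriminants of `a x² + b x + c` and `c x² + d x + e`. -/
theorem BQ.disc_scale (q : R) (f : BQ R) :
    (f.scale q).disc = q ^ 2 *
      ((f.c ^ 2 - 4 * (q * f.b) * f.d) * ((f.b ^ 2 - 4 * f.a * f.c) * (f.d ^ 2 - 4 * f.c * f.e))
      + 2 * f.c * ((q * f.b) * f.d) *
        (f.e * (f.b ^ 2 - 4 * f.a * f.c) + f.a * (f.d ^ 2 - 4 * f.c * f.e))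
      + (2 * q) ^ 2 * (64 * q ^ 2 * f.a ^ 3 * f.e ^ 3 - 48 * q * f.a ^ 2 * f.b * f.d * f.e ^ 2
        - 32 * f.a ^ 2 * f.c ^ 2 * f.e ^ 2)
      + (q * f.b) ^ 2 * (144 * f.a * f.c * f.e ^ 2 - 27 * f.b ^ 2 * f.e ^ 2)
      + (q * f.d) ^ 2 * (144 * f.a ^ 2 * f.c * f.e - 27 * f.a ^ 2 * f.d ^ 2
        - 6 * f.a * f.b ^ 2 * f.e)) := by
  simp only [BQ.scale, BQ.disc]
  ring

theorem BQ.mul_sq_dvd_disc_scale {π q : R} {f : BQ R} (hq : π ∣ 2 * q) (hb : π ∣ q * f.b)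
    (hd : π ∣ q * f.d) (h₁ : π ∣ f.b ^ 2 - 4 * f.a * f.c) (h₂ : π ∣ f.d ^ 2 - 4 * f.c * f.e) :
    (π * q) ^ 2 ∣ (f.scale q).disc := by
  have hcross : π ^ 2 ∣ 2 * f.c * ((q * f.b) * f.d) *
      (f.e * (f.b ^ 2 - 4 * f.a * f.c) + f.a * (f.d ^ 2 - 4 * f.c * f.e)) := by
    rw [show 2 * f.c * ((q * f.b) * f.d) = 2 * q * (f.c * f.b * f.d) by ring, sq]
    exact mul_dvd_mul (hq.mul_right _) (dvd_add (h₁.mul_left _) (h₂.mul_left _))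
  rw [BQ.disc_scale, mul_pow, mul_comm]
  refine mul_dvd_mul_left _ (dvd_add (dvd_add (dvd_add (dvd_add ?_ hcross) ?_) ?_) ?_)
  · exact (sq π ▸ mul_dvd_mul h₁ h₂).mul_left _
  · exact (pow_dvd_pow_of_dvd hq 2).mul_right _
  · exact (pow_dvd_pow_of_dvd hb 2).mul_right _
  · exact (pow_dvd_pow_of_dvd hd 2).mul_right _

theorem BQ.sq_dvd_disc_of_dvd_a_b {π : R} {f : BQ R} (ha : π ∣ f.a) (hb : π ∣ f.b)
    (h : π ∣ f.d ^ 2 - 4 * f.c * f.e) : π ^ 2 ∣ f.disc := by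
  have haa : π ^ 2 ∣ f.a ^ 2 := pow_dvd_pow_of_dvd ha 2
  have hbb : π ^ 2 ∣ f.b ^ 2 := pow_dvd_pow_of_dvd hb 2
  have hab : π ^ 2 ∣ f.a * f.b := sq π ▸ mul_dvd_mul ha hb
  have haE : π ^ 2 ∣ f.a * (f.d ^ 2 - 4 * f.c * f.e) := sq π ▸ mul_dvd_mul ha h
  have hdisc : f.disc = f.a * (f.d ^ 2 - 4 * f.c * f.e) * (-4 * f.c ^ 3)
      + f.a ^ 2 * (256 * f.a * f.e ^ 3 - 192 * f.b * f.d * f.e ^ 2 - 128 * f.c ^ 2 * f.e ^ 2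
        + 144 * f.c * f.d ^ 2 * f.e - 27 * f.d ^ 4)
      + f.a * f.b * (144 * f.b * f.c * f.e ^ 2 - 6 * f.b * f.d ^ 2 * f.e
        - 80 * f.c ^ 2 * f.d * f.e + 18 * f.c * f.d ^ 3)
      + f.b ^ 2 * (18 * f.b * f.c * f.d * f.e - 27 * f.b ^ 2 * f.e ^ 2 - 4 * f.b * f.d ^ 3
        - 4 * f.c ^ 3 * f.e + f.c ^ 2 * f.d ^ 2) := by
    simp only [BQ.disc]
    ring
  rw [hdisc]
  exact dvd_add (dvd_add (dvd_add (haE.mul_right _) (haa.mul_right _)) (hab.mul_right _))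
    (hbb.mul_right _)

theorem BQ.sq_dvd_disc_of_b_eq_zero {π : R} {f : BQ R} (hb : f.b = 0) (hd : π ∣ f.d)
    (h : π ∣ 4 * f.a * f.e - f.c ^ 2) : π ^ 2 ∣ f.disc := by
  have hdisc : f.disc = (4 * f.a * f.e - f.c ^ 2) ^ 2 * (16 * f.a * f.e)
      + f.d ^ 2 * (144 * f.a ^ 2 * f.c * f.e - 27 * f.a ^ 2 * f.d ^ 2 - 4 * f.a * f.c ^ 3) := by
    simp only [BQ.disc, hb]
    ring
  rw [hdisc]
  exact dvd_add ((pow_dvd_pow_of_dvd h 2).mul_right _) ((pow_dvd_pow_of_dvd hd 2).mul_right _)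

end Invariants

section SquarePlusRemainder

open Polynomial

variable {F : Type*} [Field F]

theorem degree_C_mul_add_C_sq_sub (hF : ringChar F ≠ 2) {Q L : F[X]} (hL : L ≠ 0)
    (hLQ : L.degree < Q.degree) {u : F} (hu : u ≠ 0) :
    (C (2 * u) * Q + C (u ^ 2) - L).degree = Q.degree := by
  have hmul : (C (2 * u) * Q).degree = Q.degree :=
    degree_C_mul (mul_ne_zero (Ring.two_ne_zero hF) hu)
  have hconst : (C (u ^ 2)).degree < (C (2 * u) * Q).degree :=
    hmul ▸ degree_C_le.trans_lt ((zero_le_degree_iff.2 hL).trans_lt hLQ)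
  have hadd := (degree_add_eq_left_of_degree_lt hconst).trans hmul
  exact (degree_sub_eq_left_of_degree_lt (hadd ▸ hLQ)).trans hadd

section Points

variable [Fintype F] [DecidableEq F]

/-- The affine `F`-points of the curve `z² = Q(x)² + L(x)`. -/
def squareAddPoints (Q L : F[X]) : Finset (F × F) :=
  {A | A.2 ^ 2 = Q.eval A.1 ^ 2 + L.eval A.1}

theorem mem_squareAddPoints {Q L : F[X]} {A : F × F} :
    A ∈ squareAddPoints Q L ↔ A.2 ^ 2 = Q.eval A.1 ^ 2 + L.eval A.1 := by
  simp only [squareAddPoints, Finset.mem_filter, Finset.mem_univ, true_and]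

theorem two_mul_card_le_card_squareAddPoints (hF : ringChar F ≠ 2) {Q L : F[X]}
    (h : ∀ x, ∃ z ≠ 0, z ^ 2 = Q.eval x ^ 2 + L.eval x) :
    2 * Fintype.card F ≤ (squareAddPoints Q L).card := by
  refine Finset.mul_card_image_le_card_of_maps_to (f := Prod.fst) (t := Finset.univ)
    (fun _ _ ↦ Finset.mem_univ _) 2 fun x _ ↦ ?_
  obtain ⟨z, hz, hzx⟩ := h x
  have hne : ((x, z) : F × F) ≠ (x, -z) := fun h ↦
    hz ((Ring.eq_self_iff_eq_zero_of_char_ne_two hF).1 (Prod.ext_iff.1 h).2.symm)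
  rw [← Finset.card_pair hne]
  refine Finset.card_le_card fun A hA ↦ ?_
  rcases Finset.mem_insert.1 hA with rfl | hA
  · simpa [mem_squareAddPoints] using hzx
  · rw [Finset.mem_singleton.1 hA]
    simpa [mem_squareAddPoints] using hzx

/-- On the fibre `z = Q(x) + u` the equation of the curve becomes `2uQ(x) + u² = L(x)`. -/
theorem card_squareAddPoints_fiber_le {Q L P : F[X]} {u : F}
    (hP : P = C (2 * u) * Q + C (u ^ 2) - L) (hP0 : P ≠ 0) :
    ((squareAddPoints Q L).filter fun A ↦ A.2 - Q.eval A.1 = u).card ≤ P.natDegree := by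
  set s := (squareAddPoints Q L).filter fun A ↦ A.2 - Q.eval A.1 = u
  have hinj : Set.InjOn Prod.fst (s : Set (F × F)) := by
    rintro ⟨x, z⟩ hz ⟨x', z'⟩ hz' (rfl : x = x')
    have hzz' := (Finset.mem_filter.1 hz).2.trans (Finset.mem_filter.1 hz').2.symm
    exact congrArg (x, ·) (sub_left_injective hzz')
  rw [← Finset.card_image_of_injOn hinj]
  refine card_le_degree_of_subset_roots fun x hx ↦ (mem_roots hP0).2 ?_
  obtain ⟨⟨x, z⟩, hxz, rfl⟩ := Finset.mem_image.1 hx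
  obtain ⟨hz, hu⟩ := Finset.mem_filter.1 hxz
  rw [mem_squareAddPoints] at hz
  simp only [hP, IsRoot.def, eval_sub, eval_add, eval_mul, eval_C]
  linear_combination hz - (z + Q.eval x + u) * hu

end Points

/-- The fibre of `z - Q(x)` over a nonzero `u` has at most two points and the one over zero at most
one, so a nonzero `L` leaves room for at most `2(#F - 1) + 1` of the `2#F` points. -/
theorem eq_zero_of_forall_exists_sq_eq_sq_add [Finite F] (hF : ringChar F ≠ 2) {Q L : F[X]}
    (hQ : Q.natDegree ≤ 2) (hLQ : L.degree < Q.degree)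
    (h : ∀ x, ∃ z ≠ 0, z ^ 2 = Q.eval x ^ 2 + L.eval x) : L = 0 := by
  have := Fintype.ofFinite F
  classical
  by_contra hL
  have hL1 : L.natDegree ≤ 1 := by
    have := natDegree_lt_natDegree hL hLQ
    lia
  set s := squareAddPoints Q L
  set φ : F × F → F := fun A ↦ A.2 - Q.eval A.1
  have hzero : (s.filter fun A ↦ φ A = 0).card ≤ 1 :=
    (card_squareAddPoints_fiber_le (P := -L) (by simp) (neg_ne_zero.2 hL)).trans
      ((natDegree_neg L).trans_le hL1)
  have hnonzero (u : F) (hu : u ≠ 0) : (s.filter fun A ↦ φ A = u).card ≤ 2 := by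
    have hdeg := degree_C_mul_add_C_sq_sub hF hL hLQ hu
    refine (card_squareAddPoints_fiber_le rfl fun h0 ↦ ?_).trans
      ((natDegree_eq_natDegree hdeg).trans_le hQ)
    exact not_lt_bot (a := L.degree) (by rwa [← hdeg, h0, degree_zero] at hLQ)
  have hupper : s.card ≤ 1 + (Fintype.card F - 1) * 2 := by
    rw [Finset.card_eq_sum_card_fiberwise (f := φ) (t := Finset.univ) (by simp),
      ← Finset.add_sum_erase _ _ (Finset.mem_univ 0)]
    refine add_le_add hzero ((Finset.sum_le_card_nsmul _ _ 2 fun u hu ↦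
      hnonzero u (Finset.ne_of_mem_erase hu)).trans_eq ?_)
    rw [Finset.card_erase_of_mem (Finset.mem_univ 0), Finset.card_univ, smul_eq_mul]
  have hlower := two_mul_card_le_card_squareAddPoints hF h
  have := Fintype.card_pos (α := F)
  lia

end SquarePlusRemainder

section FiniteField

open Polynomial

variable {F : Type*} [Field F]

/-- The affine curve `z² = g(t, 1)` has an `F`-rational point at which it is smooth, i.e. at which
one of the partial derivatives `2z` and `∂g/∂t` does not vanish. -/
def BQ.HasSmoothAffinePoint (g : BQ F) : Prop :=
  ∃ t z, z ^ 2 = g.eval t 1 ∧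
    (2 * z ≠ 0 ∨ 4 * g.a * t ^ 3 + 3 * g.b * t ^ 2 + 2 * g.c * t + g.d ≠ 0)

theorem BQ.d_eq_zero_of_not_hasSmoothAffinePoint {g : BQ F} (ha : g.a = 0) (hb : g.b = 0)
    (hc : g.c = 0) (hg : ¬g.HasSmoothAffinePoint) : g.d = 0 := by
  by_contra hd
  refine hg ⟨-g.e / g.d, 0, ?_, Or.inr ?_⟩
  · simp only [BQ.eval, ha, hb, hc]
    field_simp
    ring
  · simpa [ha, hb, hc] using hd

variable [Finite F]

theorem exists_sq_eq_quadratic (hF : ringChar F ≠ 2) {a : F} (ha : a ≠ 0) (b c : F) :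
    ∃ x z, z ^ 2 = a * x ^ 2 + b * x + c := by
  have := Fintype.ofFinite F
  obtain ⟨x, z, h⟩ := FiniteField.exists_root_sum_quadratic (f := C a * X ^ 2 + C b * X + C c)
    (g := -X ^ 2) (degree_quadratic ha) (by simp) (FiniteField.odd_card_of_char_ne_two hF)
  simp only [eval_add, eval_mul, eval_C, eval_pow, eval_X, eval_neg] at h
  exact ⟨x, z, by linear_combination -h⟩

theorem BQ.sq_eq_of_not_hasSmoothAffinePoint (hF : ringChar F ≠ 2) {g : BQ F}
    (ha : g.a = 0) (hb : g.b = 0) (hg : ¬g.HasSmoothAffinePoint) : g.d ^ 2 - 4 * g.c * g.e = 0 := by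
  by_cases hc : g.c = 0
  · simp [BQ.d_eq_zero_of_not_hasSmoothAffinePoint ha hb hc hg, hc]
  obtain ⟨t, z, hz⟩ := exists_sq_eq_quadratic hF hc g.d g.e
  obtain ⟨hz0, hd0⟩ : 2 * z = 0 ∧ 2 * g.c * t + g.d = 0 := by
    by_contra h
    exact hg ⟨t, z, by simpa [BQ.eval, ha, hb] using hz,
      by simpa [ha, hb] using not_and_or.1 h⟩
  linear_combination (2 * g.c * t + g.d) * hd0 + 4 * g.c * hz - 2 * g.c * z * hz0

theorem isSquare_mul_of_not_isSquare {x y : F} (hx : ¬IsSquare x) (hy : ¬IsSquare y) :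
    IsSquare (x * y) := by
  have := Fintype.ofFinite F
  classical
  by_contra hxy
  rw [← quadraticChar_neg_one_iff_not_isSquare] at hx hy hxy
  rw [map_mul, hx, hy] at hxy
  norm_num at hxy

/-- Complete the square: `a g(t, 1) = (a t² + c / 2)² + a d t + (a e - c² / 4)`. -/
theorem BQ.eq_of_forall_not_isSquare_eval (hF : ringChar F ≠ 2) {g : BQ F} (ha : ¬IsSquare g.a)
    (hb : g.b = 0) (h : ∀ t, ¬IsSquare (g.eval t 1)) :
    g.d = 0 ∧ 4 * g.a * g.e = g.c ^ 2 := by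
  have h2 : (2 : F) ≠ 0 := Ring.two_ne_zero hF
  have h4 : (4 : F) ≠ 0 := by simpa [show (4 : F) = 2 * 2 by norm_num] using h2
  have ha0 : g.a ≠ 0 := fun h0 ↦ ha (h0 ▸ IsSquare.zero)
  set Q : F[X] := C g.a * X ^ 2 + C 0 * X + C (g.c / 2)
  set L : F[X] := C (g.a * g.d) * X + C (g.a * g.e - g.c ^ 2 / 4)
  have hL : L = 0 := by
    refine eq_zero_of_forall_exists_sq_eq_sq_add (Q := Q) hF natDegree_quadratic_le
      (degree_linear_le.trans_lt (by rw [degree_quadratic ha0]; decide)) fun t ↦ ?_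
    obtain ⟨z, hz⟩ := isSquare_mul_of_not_isSquare ha (h t)
    refine ⟨z, fun hz0 ↦ h t ?_, ?_⟩
    · rw [(mul_eq_zero_iff_left ha0).1 (hz.trans (by rw [hz0, mul_zero]))]
      exact IsSquare.zero
    · simp only [Q, L, eval_add, eval_mul, eval_C, eval_pow, eval_X]
      simp only [BQ.eval, hb] at hz
      field_simp
      linear_combination -16 * hz
  have h1 : g.a * g.d = 0 := by simpa [L] using congrArg (coeff · 1) hL
  have h0 : g.a * g.e - g.c ^ 2 / 4 = 0 := by simpa [L] using congrArg (coeff · 0) hL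
  refine ⟨(mul_eq_zero_iff_left ha0).1 h1, ?_⟩
  field_simp at h0
  linear_combination h0

end FiniteField

section PadicIntegers

theorem toZMod_eq_zero_iff_dvd {x : ℤ_[p]} : PadicInt.toZMod x = 0 ↔ (p : ℤ_[p]) ∣ x := by
  rw [← RingHom.mem_ker, PadicInt.ker_toZMod, PadicInt.maximalIdeal_eq_span_p,
    Ideal.mem_span_singleton]

theorem not_isUnit_iff_dvd {x : ℤ_[p]} : ¬IsUnit x ↔ (p : ℤ_[p]) ∣ x :=
  PadicInt.not_isUnit_iff.trans (PadicInt.norm_lt_one_iff_dvd x)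

theorem isUnit_two (hp : p ≠ 2) : IsUnit (2 : ℤ_[p]) := by
  have h2 : (2 : ZMod p) ≠ 0 := Ring.two_ne_zero ((ZMod.ringChar_zmod_n p).trans_ne hp)
  by_contra h
  rw [not_isUnit_iff_dvd, ← toZMod_eq_zero_iff_dvd, map_ofNat] at h
  exact h2 h

theorem two_dvd_sub_sq (x : ℤ_[2]) : 2 ∣ x - x ^ 2 := by
  have h : ∀ y : ZMod 2, y - y ^ 2 = 0 := by decide
  have hx : ((2 : ℕ) : ℤ_[2]) ∣ x - x ^ 2 := by
    rw [← toZMod_eq_zero_iff_dvd, map_sub, map_pow, h]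
  exact_mod_cast hx

open Polynomial in
theorem exists_eval_eq_zero_of_not_dvd {P : ℤ_[p][X]} {x : ℤ_[p]}
    (h : ¬P.eval x ∣ P.derivative.eval x ^ 2) : ∃ t, P.eval t = 0 := by
  obtain h' | ⟨r, hr⟩ := ValuationRing.dvd_total (P.eval x) (P.derivative.eval x ^ 2)
  · exact absurd h' h
  have hder : P.derivative.eval x ≠ 0 := fun h0 ↦ h (by simp [h0])
  have hr1 : ‖r‖ < 1 := PadicInt.not_isUnit_iff.1 fun hu ↦ h (hr ▸ (hu.mul_right_dvd.2 dvd_rfl))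
  have hnorm : ‖P.aeval x‖ < ‖P.derivative.aeval x‖ ^ 2 := by
    simp only [Polynomial.coe_aeval_eq_eval]
    rw [hr, norm_mul, norm_pow]
    exact mul_lt_of_lt_one_right (by positivity) hr1
  obtain ⟨t, ht, -⟩ := hensels_lemma hnorm
  exact ⟨t, by simpa [Polynomial.coe_aeval_eq_eval] using ht⟩

end PadicIntegers

section Solubility

theorem coe_ringHom_eq_zero_iff {x : ℤ_[p]} : PadicInt.Coe.ringHom x = 0 ↔ x = 0 :=
  map_eq_zero_iff _ Subtype.coe_injective

theorem SolubleP.of_eval_eq_sq {f : BQ ℤ_[p]} {x y w : ℤ_[p]} (hxy : ¬(x = 0 ∧ y = 0))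
    (h : f.eval x y = w ^ 2) : SolubleP f :=
  ⟨PadicInt.Coe.ringHom x, PadicInt.Coe.ringHom y, PadicInt.Coe.ringHom w,
    by simpa only [coe_ringHom_eq_zero_iff] using hxy, by rw [BQ.eval_map, h, map_pow]⟩

theorem SolubleP.of_subst {f : BQ ℤ_[p]} {m : Mat2 ℤ_[p]} (hm : m.det ≠ 0)
    (h : SolubleP (f.subst m)) : SolubleP f := by
  obtain ⟨x, y, z, hxy, h⟩ := h
  rw [BQ.map_subst, BQ.eval_subst] at h
  refine ⟨_, _, z, fun ⟨hx, hy⟩ ↦ hxy ?_, h⟩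
  set M := m.map (PadicInt.Coe.ringHom (p := p))
  have hM : M.det ≠ 0 := by
    have hdet : M.det = PadicInt.Coe.ringHom m.det := by simp [M, Mat2.det, Mat2.map]
    rwa [hdet, ne_eq, coe_ringHom_eq_zero_iff]
  constructor <;> refine (mul_eq_zero_iff_left hM).1 ?_ <;> simp only [Mat2.det]
  · linear_combination M.s * hx - M.r * hy
  · linear_combination M.p * hy - M.q * hx

theorem SolubleP.rsmul_sq {f : BQ ℤ_[p]} (h : SolubleP f) (q : ℤ_[p]) :
    SolubleP (f.rsmul (q ^ 2)) := by
  obtain ⟨x, y, z, hxy, h⟩ := h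
  refine ⟨x, y, PadicInt.Coe.ringHom q * z, hxy, ?_⟩
  have hmap : (f.rsmul (q ^ 2)).map PadicInt.Coe.ringHom =
      (f.map PadicInt.Coe.ringHom).rsmul (PadicInt.Coe.ringHom q ^ 2) := by
    simp only [BQ.map, BQ.rsmul, map_mul, map_pow]
  rw [hmap, BQ.eval_rsmul, mul_pow, h]

theorem SolubleP.scale_of_reverse {f : BQ ℤ_[p]} {q : ℤ_[p]} (hq : q ≠ 0)
    (h : SolubleP (f.reverse.scale q)) : SolubleP (f.scale q) :=
  .of_subst (m := ⟨0, q, 1, 0⟩) (by simpa [Mat2.det] using hq)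
    (f.scale_subst_antidiagonal q ▸ h.rsmul_sq q)

theorem SolubleP.of_reverse {f : BQ ℤ_[p]} (h : SolubleP f.reverse) : SolubleP f := by
  rw [← BQ.scale_one f.reverse] at h
  simpa only [BQ.scale_one] using h.scale_of_reverse one_ne_zero

theorem exists_eval_eq_sq_of_norm_le {f : BQ ℤ_[p]} {x y z : ℚ_[p]} (hy : y ≠ 0) (hxy : ‖x‖ ≤ ‖y‖)
    (h : z ^ 2 = (f.map PadicInt.Coe.ringHom).eval x y) : ∃ t w, f.eval t 1 = w ^ 2 := by
  have ht : ‖x / y‖ ≤ 1 := by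
    rw [norm_div]
    exact div_le_one_of_le₀ hxy (norm_nonneg y)
  obtain ⟨t, htxy⟩ : ∃ t : ℤ_[p], PadicInt.Coe.ringHom t = x / y := ⟨⟨x / y, ht⟩, rfl⟩
  have hw : (z / y ^ 2) ^ 2 = PadicInt.Coe.ringHom (f.eval t 1) := by
    rw [div_pow, h, ← BQ.eval_map, map_one, htxy]
    simp only [BQ.eval]
    field_simp
  have hw1 : ‖z / y ^ 2‖ ≤ 1 := by
    rw [← pow_le_one_iff_of_nonneg (norm_nonneg _) two_ne_zero, ← norm_pow, hw]
    exact (f.eval t 1).norm_le_one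
  obtain ⟨w, hwz⟩ : ∃ w : ℤ_[p], PadicInt.Coe.ringHom w = z / y ^ 2 := ⟨⟨z / y ^ 2, hw1⟩, rfl⟩
  exact ⟨t, w, Subtype.coe_injective ((hwz ▸ hw).symm.trans (map_pow _ _ _).symm)⟩

/-- A point of `ℙ¹(ℚ_p)` lies in one of the two integral charts. -/
theorem SolubleP.exists_subst_a_eq_sq {f : BQ ℤ_[p]} (h : SolubleP f) :
    ∃ m w, m.det ^ 2 = 1 ∧ (f.subst m).a = w ^ 2 := by
  obtain ⟨x, y, z, hxy, h⟩ := h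
  rcases le_total ‖x‖ ‖y‖ with hle | hle
  · have hy : y ≠ 0 := fun hy ↦ hxy ⟨by simpa [hy] using hle, hy⟩
    obtain ⟨t, w, hw⟩ := exists_eval_eq_sq_of_norm_le hy hle h
    exact ⟨⟨t, 1, 1, 0⟩, w, by norm_num [Mat2.det], hw⟩
  · have hx : x ≠ 0 := fun hx ↦ hxy ⟨hx, by simpa [hx] using hle⟩
    obtain ⟨t, w, hw⟩ := exists_eval_eq_sq_of_norm_le (f := f.reverse) hx hle
      (h.trans (BQ.eval_reverse _ _ _).symm)
    exact ⟨⟨1, t, 0, 1⟩, w, by norm_num [Mat2.det], (f.eval_reverse t 1).symm.trans hw⟩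

end Solubility

section Insoluble

variable {f : BQ ℤ_[p]}

open Polynomial in
theorem eval_sub_sq_dvd_two_mul_sq (hf : ¬SolubleP f) (t w : ℤ_[p]) :
    f.eval t 1 - w ^ 2 ∣ (2 * w) ^ 2 := by
  by_contra h
  set P : ℤ_[p][X] := X ^ 2 - C (f.eval t 1)
  have heval : P.eval w = -(f.eval t 1 - w ^ 2) := by simp [P]
  have hderiv : P.derivative.eval w = 2 * w := by simp [P, one_add_one_eq_two]
  obtain ⟨v, hv⟩ := exists_eval_eq_zero_of_not_dvd (P := P) (x := w) (by
    rwa [heval, hderiv, neg_dvd])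
  exact hf (.of_eval_eq_sq (x := t) (y := 1) (w := v) (by simp)
    (sub_eq_zero.1 (by simpa [P] using hv)).symm)

open Polynomial in
theorem eval_sub_sq_dvd_deriv_sq (hf : ¬SolubleP f) (t w : ℤ_[p]) :
    f.eval t 1 - w ^ 2 ∣ (4 * f.a * t ^ 3 + 3 * f.b * t ^ 2 + 2 * f.c * t + f.d) ^ 2 := by
  by_contra h
  set P : ℤ_[p][X] := C f.a * X ^ 4 + C f.b * X ^ 3 + C f.c * X ^ 2 + C f.d * X + C (f.e - w ^ 2)
  have heval (s : ℤ_[p]) : P.eval s = f.eval s 1 - w ^ 2 := by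
    simp only [P, BQ.eval, eval_add, eval_mul, eval_C, eval_pow, eval_X]
    ring
  have hderiv : P.derivative.eval t = 4 * f.a * t ^ 3 + 3 * f.b * t ^ 2 + 2 * f.c * t + f.d := by
    simp only [P, derivative_add, derivative_mul, derivative_C, derivative_X_pow_succ, derivative_X,
      eval_add, eval_mul, eval_C, eval_pow, eval_X, Nat.cast_ofNat, Nat.cast_one, zero_mul,
      zero_add, add_zero, mul_one, pow_one]
    ring
  obtain ⟨s, hs⟩ := exists_eval_eq_zero_of_not_dvd (P := P) (x := t) (by rwa [heval, hderiv])
  exact hf (.of_eval_eq_sq (x := s) (y := 1) (w := w) (by simp) (sub_eq_zero.1 (heval s ▸ hs)))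

theorem a_sub_sq_dvd_two_mul_sq (hf : ¬SolubleP f) (w : ℤ_[p]) : f.a - w ^ 2 ∣ (2 * w) ^ 2 := by
  simpa [BQ.eval, BQ.reverse] using eval_sub_sq_dvd_two_mul_sq (mt SolubleP.of_reverse hf) 0 w

theorem a_sub_sq_dvd_b_sq (hf : ¬SolubleP f) (w : ℤ_[p]) : f.a - w ^ 2 ∣ f.b ^ 2 := by
  simpa [BQ.eval, BQ.reverse] using eval_sub_sq_dvd_deriv_sq (mt SolubleP.of_reverse hf) 0 w

theorem not_hasSmoothAffinePoint_map_toZMod (hf : ¬SolubleP f) :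
    ¬(f.map PadicInt.toZMod).HasSmoothAffinePoint := by
  rintro ⟨t, z, h, hs⟩
  obtain ⟨t, rfl⟩ := ZMod.ringHom_surjective PadicInt.toZMod t
  obtain ⟨z, rfl⟩ := ZMod.ringHom_surjective PadicInt.toZMod z
  have hdvd : (p : ℤ_[p]) ∣ f.eval t 1 - z ^ 2 := by
    rw [← toZMod_eq_zero_iff_dvd, map_sub, map_pow, h, ← BQ.eval_map, map_one, sub_self]
  rcases hs with hs | hs
  · refine hs ?_
    have := PadicInt.prime_p.dvd_of_dvd_pow (hdvd.trans (eval_sub_sq_dvd_two_mul_sq hf t z))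
    simpa [map_ofNat] using toZMod_eq_zero_iff_dvd.2 this
  · refine hs ?_
    have := PadicInt.prime_p.dvd_of_dvd_pow (hdvd.trans (eval_sub_sq_dvd_deriv_sq hf t z))
    simpa [BQ.map, map_ofNat] using toZMod_eq_zero_iff_dvd.2 this

theorem not_isSquare_eval_map_toZMod (hp : p ≠ 2) (hf : ¬SolubleP f) {t : ℤ_[p]}
    (ht : ¬(p : ℤ_[p]) ∣ f.eval t 1) :
    ¬IsSquare ((f.map PadicInt.toZMod).eval (PadicInt.toZMod t) 1) := by
  rintro ⟨z, hz⟩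
  refine not_hasSmoothAffinePoint_map_toZMod hf ⟨_, z, by rw [hz, sq], Or.inl ?_⟩
  refine mul_ne_zero (Ring.two_ne_zero ((ZMod.ringChar_zmod_n p).trans_ne hp)) fun hz0 ↦ ht ?_
  rw [← toZMod_eq_zero_iff_dvd, ← BQ.eval_map, map_one, hz, hz0, mul_zero]

theorem dvd_sq_sub_four_mul_of_dvd_a_b (hp : p ≠ 2) (hf : ¬SolubleP f) (ha : (p : ℤ_[p]) ∣ f.a)
    (hb : (p : ℤ_[p]) ∣ f.b) : (p : ℤ_[p]) ∣ f.d ^ 2 - 4 * f.c * f.e := by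
  have h := BQ.sq_eq_of_not_hasSmoothAffinePoint ((ZMod.ringChar_zmod_n p).trans_ne hp)
    (toZMod_eq_zero_iff_dvd.2 ha) (toZMod_eq_zero_iff_dvd.2 hb)
    (not_hasSmoothAffinePoint_map_toZMod hf)
  rw [← toZMod_eq_zero_iff_dvd]
  simpa [BQ.map, map_ofNat] using h

theorem sq_dvd_disc_of_dvd_a (hp : p ≠ 2) (hf : ¬SolubleP f) (ha : (p : ℤ_[p]) ∣ f.a) :
    (p : ℤ_[p]) ^ 2 ∣ f.disc := by
  have hb : (p : ℤ_[p]) ∣ f.b :=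
    PadicInt.prime_p.dvd_of_dvd_pow (ha.trans (by simpa using a_sub_sq_dvd_b_sq hf 0))
  exact BQ.sq_dvd_disc_of_dvd_a_b ha hb (dvd_sq_sub_four_mul_of_dvd_a_b hp hf ha hb)

theorem sq_dvd_disc_of_forall_not_dvd_eval (hp : p ≠ 2) (hf : ¬SolubleP f)
    (ha : ¬(p : ℤ_[p]) ∣ f.a) (hb : f.b = 0) (h : ∀ t, ¬(p : ℤ_[p]) ∣ f.eval t 1) :
    (p : ℤ_[p]) ^ 2 ∣ f.disc := by
  have hsq : ¬IsSquare (f.map PadicInt.toZMod).a := by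
    simpa [BQ.eval, BQ.map, BQ.reverse] using not_isSquare_eval_map_toZMod hp
      (mt SolubleP.of_reverse hf) (t := 0) (by simpa [BQ.eval, BQ.reverse] using ha)
  obtain ⟨hd, hc⟩ := BQ.eq_of_forall_not_isSquare_eval ((ZMod.ringChar_zmod_n p).trans_ne hp) hsq
    (by simp [BQ.map, hb]) fun t ↦ by
      obtain ⟨t, rfl⟩ := ZMod.ringHom_surjective PadicInt.toZMod t
      exact not_isSquare_eval_map_toZMod hp hf (h t)
  refine BQ.sq_dvd_disc_of_b_eq_zero hb (toZMod_eq_zero_iff_dvd.1 hd) ?_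
  rw [← toZMod_eq_zero_iff_dvd]
  simpa [BQ.map, map_ofNat, sub_eq_zero] using hc

theorem sq_dvd_disc_of_not_solubleP (hp : p ≠ 2) (hf : ¬SolubleP f) :
    (p : ℤ_[p]) ^ 2 ∣ f.disc := by
  have hsubst {m : Mat2 ℤ_[p]} (hm : m.det ^ 2 = 1) : ¬SolubleP (f.subst m) :=
    mt (SolubleP.of_subst fun h0 ↦ by simp [h0] at hm) hf
  by_cases ha : (p : ℤ_[p]) ∣ f.a
  · exact sq_dvd_disc_of_dvd_a hp hf ha
  by_cases hroot : ∃ t, (p : ℤ_[p]) ∣ f.eval t 1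
  · obtain ⟨t, ht⟩ := hroot
    have hm : (⟨t, 1, 1, 0⟩ : Mat2 ℤ_[p]).det ^ 2 = 1 := by norm_num [Mat2.det]
    rw [← BQ.disc_subst_of_det_sq_eq_one hm]
    exact sq_dvd_disc_of_dvd_a hp (hsubst hm) ht
  have hunit : IsUnit (2 * 2 * f.a) :=
    ((isUnit_two hp).mul (isUnit_two hp)).mul (not_not.1 fun h ↦ ha (not_isUnit_iff_dvd.1 h))
  obtain ⟨s, hs⟩ := hunit.dvd (a := -f.b)
  have hm : (⟨1, 0, s, 1⟩ : Mat2 ℤ_[p]).det ^ 2 = 1 := by norm_num [Mat2.det]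
  rw [← BQ.disc_subst_of_det_sq_eq_one hm]
  refine sq_dvd_disc_of_forall_not_dvd_eval hp (hsubst hm) (by simpa [BQ.subst] using ha) ?_
    fun t ht ↦ hroot ⟨t + s, by simpa [BQ.eval_subst] using ht⟩
  simp only [BQ.subst]
  linear_combination -hs

theorem mul_sq_dvd_disc_scale_of_not_solubleP (hp : p ≠ 2) {q : ℤ_[p]} (hq : q ≠ 0)
    (hpq : (p : ℤ_[p]) ∣ q) (hf : ¬SolubleP (f.scale q)) : (p * q) ^ 2 ∣ (f.scale q).disc := by
  have hconic {g : BQ ℤ_[p]} (hg : ¬SolubleP (g.scale q)) :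
      (p : ℤ_[p]) ∣ g.d ^ 2 - 4 * g.c * g.e :=
    dvd_sq_sub_four_mul_of_dvd_a_b (f := g.scale q) hp hg
      ((hpq.pow two_ne_zero).mul_right _) (hpq.mul_right _)
  have hrev : (p : ℤ_[p]) ∣ f.b ^ 2 - 4 * f.c * f.a :=
    hconic (g := f.reverse) (mt (SolubleP.scale_of_reverse hq) hf)
  exact BQ.mul_sq_dvd_disc_scale (hpq.mul_left _) (hpq.mul_right _) (hpq.mul_right _)
    (mul_right_comm 4 f.a f.c ▸ hrev) (hconic hf)

theorem two_dvd_b_of_not_solubleP {f : BQ ℤ_[2]} (hf : ¬SolubleP f) : 2 ∣ f.b :=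
  PadicInt.prime_p.dvd_of_dvd_pow (p := 2)
    ((two_dvd_sub_sq f.a).trans (a_sub_sq_dvd_b_sq hf f.a))

theorem two_mul_sq_dvd_disc_scale_of_not_solubleP {f : BQ ℤ_[2]} {q : ℤ_[2]} (hq : q ≠ 0)
    (hf : ¬SolubleP (f.scale q)) : (2 * q) ^ 2 ∣ (f.scale q).disc := by
  have hd {g : BQ ℤ_[2]} (hg : ¬SolubleP (g.scale q)) : 2 ∣ g.d :=
    two_dvd_b_of_not_solubleP (mt SolubleP.of_reverse hg)
  have hb : 2 ∣ f.b := hd (g := f.reverse) (mt (SolubleP.scale_of_reverse hq) hf)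
  have hsub {x : ℤ_[2]} (hx : 2 ∣ x) (y z : ℤ_[2]) : 2 ∣ x ^ 2 - 4 * y * z :=
    dvd_sub (hx.pow two_ne_zero) (Dvd.intro (2 * y * z) (by ring))
  exact BQ.mul_sq_dvd_disc_scale (dvd_mul_right 2 q) (hb.mul_left q) ((hd hf).mul_left q)
    (hsub hb _ _) (hsub (hd hf) _ _)

theorem CongMod.dvd_eval_sub_eval {N : ℕ} {f g : BQ ℤ_[p]} (h : CongMod N f g) (x y : ℤ_[p]) :
    (p : ℤ_[p]) ^ N ∣ f.eval x y - g.eval x y := by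
  obtain ⟨ha, hb, hc, hd, he⟩ := h
  have hsub : f.eval x y - g.eval x y = (f.a - g.a) * x ^ 4 + (f.b - g.b) * (x ^ 3 * y) +
      (f.c - g.c) * (x ^ 2 * y ^ 2) + (f.d - g.d) * (x * y ^ 3) + (f.e - g.e) * y ^ 4 := by
    simp only [BQ.eval]
    ring
  rw [hsub]
  exact dvd_add (dvd_add (dvd_add (dvd_add (ha.mul_right _) (hb.mul_right _)) (hc.mul_right _))
    (hd.mul_right _)) (he.mul_right _)

theorem exists_scale_eq {q w : ℤ_[p]} (hf : ¬SolubleP f) (hq : (2 * q) ^ 2 ∣ f.a - w ^ 2) :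
    ∃ g : BQ ℤ_[p], g.scale q = f := by
  have hw : q ∣ w := by
    have := (IsIntegrallyClosed.pow_dvd_pow_iff two_ne_zero).1
      (hq.trans (a_sub_sq_dvd_two_mul_sq hf w))
    exact (mul_dvd_mul_iff_left two_ne_zero).1 this
  have hqa : q ^ 2 ∣ f.a - w ^ 2 := (pow_dvd_pow_of_dvd (dvd_mul_left q 2) 2).trans hq
  obtain ⟨a, ha⟩ := (dvd_sub_left (pow_dvd_pow_of_dvd hw 2)).1 hqa
  obtain ⟨b, hb⟩ : q ∣ f.b := (IsIntegrallyClosed.pow_dvd_pow_iff two_ne_zero).1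
    (hqa.trans (a_sub_sq_dvd_b_sq hf w))
  exact ⟨⟨a, b, f.c, f.d, f.e⟩, by rw [BQ.scale, ← ha, ← hb]⟩

theorem exists_scale_disc_eq {f₀ : BQ ℤ_[p]} {q : ℤ_[p]} {N : ℕ}
    (hq : (2 * q) ^ 2 ∣ (p : ℤ_[p]) ^ N) (hf : ¬SolubleP f) (hf₀ : SolubleP f₀)
    (h : CongMod N f f₀) :
    ∃ g : BQ ℤ_[p], ¬SolubleP (g.scale q) ∧ (g.scale q).disc = f.disc := by
  obtain ⟨m, w, hm, hw⟩ := hf₀.exists_subst_a_eq_sq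
  have hsubst : ¬SolubleP (f.subst m) := mt (SolubleP.of_subst fun h0 ↦ by simp [h0] at hm) hf
  obtain ⟨g, hg⟩ := exists_scale_eq (w := w) hsubst
    (hq.trans (hw ▸ h.dvd_eval_sub_eval m.p m.q))
  exact ⟨g, hg ▸ hsubst, hg ▸ BQ.disc_subst_of_det_sq_eq_one hm f⟩

end Insoluble

/-- Insoluble forms congruent to soluble ones have highly divisible
discriminant. -/
theorem insoluble_near_soluble_disc (k : ℕ) :
    (∀ (p' : ℕ) [Fact p'.Prime], p' ≠ 2 →
      ∀ f f₀ : BQ ℤ_[p'], ¬ SolubleP f → SolubleP f₀ → CongMod (2 * k) f f₀ →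
        (p' : ℤ_[p']) ^ (2 * k + 2) ∣ f.disc) ∧
    (∀ f f₀ : BQ ℤ_[(2 : ℕ)], ¬ SolubleP f → SolubleP f₀ → CongMod (2 * k + 2) f f₀ →
        (2 : ℤ_[(2 : ℕ)]) ^ (2 * k + 2) ∣ f.disc) := by
  refine ⟨fun p _ hp f f₀ hf hf₀ h ↦ ?_, fun f f₀ hf hf₀ h ↦ ?_⟩
  · cases k with
    | zero => exact sq_dvd_disc_of_not_solubleP hp hf
    | succ k =>
      have hp0 : (p : ℤ_[p]) ≠ 0 := PadicInt.prime_p.ne_zero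
      have hq : (2 * (p : ℤ_[p]) ^ (k + 1)) ^ 2 ∣ (p : ℤ_[p]) ^ (2 * (k + 1)) := by
        rw [mul_pow, ← pow_mul, mul_comm (k + 1), ((isUnit_two hp).pow 2).mul_left_dvd]
      obtain ⟨g, hg, hdisc⟩ := exists_scale_disc_eq hq hf hf₀ h
      rw [← hdisc, show (p : ℤ_[p]) ^ (2 * (k + 1) + 2) = (p * p ^ (k + 1)) ^ 2 by ring]
      exact mul_sq_dvd_disc_scale_of_not_solubleP hp (pow_ne_zero _ hp0)
        (dvd_pow_self _ k.succ_ne_zero) hg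
  · have hq : (2 * 2 ^ k : ℤ_[2]) ^ 2 = 2 ^ (2 * k + 2) := by ring
    obtain ⟨g, hg, hdisc⟩ := exists_scale_disc_eq (by rw [hq, Nat.cast_ofNat]) hf hf₀ h
    rw [← hdisc, ← hq]
    exact two_mul_sq_dvd_disc_scale_of_not_solubleP (pow_ne_zero k two_ne_zero) hg

end BQPaper
end
end

section
/- There is an absolute constant C such that for every prime p, denoting by ν the Haar probability measure on V(ℤ_p) ≅ ℤ_p⁵: ν({f ∈ V(ℤ_p) : p² ∣ Δ(f)}) ≤ C p^{−2}; ν({f ∈ V(ℤ_p) : p⁴ ∣ Δ(f)}) ≤ C p^{−4}; and for every integer k ≥ 3, ν({f ∈ V(ℤ_p) : p^{2k} ∣ Δ(f)}) ≤ C k p^{−3k/2}. -/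
noncomputable section

namespace BQPaper

open MeasureTheory

instance (p : Nat.Primes) : Fact (p : ℕ).Prime := ⟨p.2⟩

noncomputable instance (p : ℕ) [Fact p.Prime] : MeasurableSpace ℤ_[p] := borel _
instance (p : ℕ) [Fact p.Prime] : BorelSpace ℤ_[p] := ⟨rfl⟩

/-- View a vector of coefficients as a binary quartic form. -/
def ofVec {R : Type*} (v : Fin 5 → R) : BQ R := ⟨v 0, v 1, v 2, v 3, v 4⟩

/-- The set of binary quartic forms over `ℤ_p` whose discriminant is divisible
by `p^j`. -/
def discDivSet (p : Nat.Primes) (j : ℕ) : Set (Fin 5 → ℤ_[(p : ℕ)]) :=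
  {v | ((p : ℕ) : ℤ_[(p : ℕ)]) ^ j ∣ (ofVec v).disc}
/-!
By the syzygy between the seminvariants of a quartic form with leading coefficients `a` and `b`,
a constant multiple of `a⁶ Δ` equals `4i³ - j²`, where `j = r² + h³ - 3ih` and `(h, r, i)` is a
triangular function of the remaining coefficients `(c, d, e)`: each component is affine in its own
coefficient, with slope a constant multiple of a power of `a`. So as long as `a` divides `24`, one
may replace `(c, d, e)` by `(h, r, i)` at the cost of a constant factor.

Suppose that `p ^ (2k)` divides `4i³ - j²`. If `16i³` has smaller valuation, then Hensel's lemma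
makes `i = w²` a square, and `(h, r)` is `p`-adically close to one of the two nodal cubics
`r² + (h ± w)² (h ∓ 2w) = 0`. Otherwise both `i` and `j` are small, and `(h, r)` is close to the
cubic `r² + h³ - 3ih = 0`, which is nearly cuspidal. The volumes of these neighbourhoods are
estimated by slicing along `h` and then integrated over `i`.

Finally, if the leading coefficient of `f(x, y + tx)` fails to divide `24` for all
`t = 0, ±1, ±2`, then interpolation shows that `f` is `p` times an integral form, whose
discriminant is divisible by `p ^ (2k - 6)`. Such forms contribute `p ^ (-5)` times the density for
`k - 3`, which allows an induction on `k`.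
-/

open Set Function
open scoped ENNReal Pointwise

section MeasureTheory

section CompactGroup

variable {G H : Type*} [AddCommGroup G] [TopologicalSpace G] [IsTopologicalAddGroup G]
  [T2Space G] [MeasurableSpace G] [BorelSpace G] [AddCommGroup H] [TopologicalSpace H]
  [IsTopologicalAddGroup H] [CompactSpace H] [MeasurableSpace H] [BorelSpace H]

lemma isAddHaarMeasure_of_isProbabilityMeasure (μ : Measure H) [IsProbabilityMeasure μ]
    [μ.IsAddLeftInvariant] : μ.IsAddHaarMeasure :=
  Measure.isAddHaarMeasure_of_isCompact_nonempty_interior μ univ isCompact_univ (by simp)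
    (by simp) (by simp)

lemma eq_of_isAddLeftInvariant_of_isProbabilityMeasure (μ μ' : Measure H) [IsProbabilityMeasure μ]
    [μ.IsAddLeftInvariant] [IsProbabilityMeasure μ'] [μ'.IsAddLeftInvariant] : μ = μ' := by
  have := isAddHaarMeasure_of_isProbabilityMeasure μ
  have := isAddHaarMeasure_of_isProbabilityMeasure μ'
  exact Measure.isAddHaarMeasure_eq_of_isProbabilityMeasure μ μ'

lemma measure_image_addMonoidHom (μ : Measure H) [IsProbabilityMeasure μ] [μ.IsAddLeftInvariant]
    (ν : Measure G) [IsFiniteMeasure ν] [ν.IsAddLeftInvariant] {φ : H →+ G}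
    (hφ : Continuous φ) (hinj : Injective φ) (S : Set H) :
    ν (φ '' S) = ν (range φ) * μ S := by
  have hemb : MeasurableEmbedding φ := (hφ.isClosedEmbedding hinj).measurableEmbedding
  have := isAddHaarMeasure_of_isProbabilityMeasure μ
  have : (ν.comap φ).IsAddLeftInvariant := Measure.IsAddLeftInvariant.comap ν hemb
  have : IsFiniteMeasure (ν.comap φ) := ⟨by rw [hemb.comap_apply]; exact measure_lt_top _ _⟩
  have heq := Measure.isAddInvariant_eq_smul_of_compactSpace (ν.comap φ) μ
  have huniv := DFunLike.congr_fun heq univ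
  have hS := DFunLike.congr_fun heq S
  simp only [hemb.comap_apply, Measure.smul_apply, measure_univ, image_univ, ENNReal.smul_def,
    smul_eq_mul, mul_one] at huniv hS
  rw [hS, huniv]

end CompactGroup

variable {X Y X' Y' : Type*} [MeasurableSpace X] [MeasurableSpace Y] [MeasurableSpace X']
  [MeasurableSpace Y'] {μ : Measure X} {ν : Measure Y} {μ' : Measure X'} {ν' : Measure Y'}

lemma map_prod_skew_le [SFinite ν] [SFinite ν'] {φ : X → X'} {ψ : X → Y → Y'} {A B : ℝ≥0∞}
    (hφ : Measurable φ) (hψ : Measurable (uncurry ψ)) (hA : μ.map φ ≤ A • μ')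
    (hB : ∀ x, ν.map (ψ x) ≤ B • ν') :
    (μ.prod ν).map (fun q ↦ (φ q.1, ψ q.1 q.2)) ≤ (A * B) • μ'.prod ν' := by
  have hskew : Measurable fun q : X × Y ↦ (φ q.1, ψ q.1 q.2) := by fun_prop
  refine Measure.le_iff.2 fun S hS ↦ ?_
  have hfib : Measurable fun x' ↦ ν' (Prod.mk x' ⁻¹' S) := measurable_measure_prodMk_left hS
  calc (μ.prod ν).map (fun q ↦ (φ q.1, ψ q.1 q.2)) S
      = ∫⁻ x, ν.map (ψ x) (Prod.mk (φ x) ⁻¹' S) ∂μ := by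
        rw [Measure.map_apply hskew hS, Measure.prod_apply (hskew hS)]
        refine lintegral_congr fun x ↦ ?_
        rw [Measure.map_apply (by fun_prop) (measurable_prodMk_left hS)]
        rfl
    _ ≤ ∫⁻ x, B * ν' (Prod.mk (φ x) ⁻¹' S) ∂μ := lintegral_mono fun x ↦ hB x _
    _ = B * ∫⁻ x', ν' (Prod.mk x' ⁻¹' S) ∂μ.map φ := by
        rw [lintegral_map hfib hφ]
        exact lintegral_const_mul B (hfib.comp hφ)
    _ ≤ B * ∫⁻ x', ν' (Prod.mk x' ⁻¹' S) ∂A • μ' := by gcongr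
    _ = ((A * B) • μ'.prod ν') S := by
        rw [lintegral_smul_measure, Measure.smul_apply, Measure.prod_apply hS, smul_eq_mul,
          smul_eq_mul]
        ring

lemma lintegral_le_sum_add_of_cover {ι : Type*} {s : Finset ι} {A : ι → Set X} {B : Set X}
    {f : X → ℝ≥0∞} {F : ι → ℝ≥0∞} {b : ℝ≥0∞}
    (hf : ∀ x, f x ≠ 0 → (∃ i ∈ s, x ∈ A i ∧ f x ≤ F i) ∨ x ∈ B ∧ f x ≤ b) :
    ∫⁻ x, f x ∂μ ≤ ∑ i ∈ s, F i * μ (A i) + b * μ B := by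
  -- The `A i` need not be measurable, so they are replaced by measurable hulls.
  have hpoint (x : X) : f x ≤ ∑ i ∈ s, (toMeasurable μ (A i)).indicator (fun _ ↦ F i) x
      + (toMeasurable μ B).indicator (fun _ ↦ b) x := by
    rcases eq_or_ne (f x) 0 with h0 | h0
    · simp [h0]
    rcases hf x h0 with ⟨i, hi, hxi, hle⟩ | ⟨hxB, hle⟩
    · refine le_add_right (le_trans ?_ (Finset.single_le_sum (fun _ _ ↦ zero_le) hi))
      rwa [indicator_of_mem (subset_toMeasurable μ _ hxi)]
    · refine le_add_left ?_
      rwa [indicator_of_mem (subset_toMeasurable μ _ hxB)]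
  have hmeas (S : Set X) (c : ℝ≥0∞) : Measurable ((toMeasurable μ S).indicator fun _ ↦ c) :=
    measurable_const.indicator (measurableSet_toMeasurable μ S)
  refine (lintegral_mono hpoint).trans_eq ?_
  rw [lintegral_add_right _ (hmeas B b), lintegral_finsetSum _ fun i _ ↦ hmeas (A i) (F i)]
  simp only [lintegral_indicator_const (measurableSet_toMeasurable μ _), measure_toMeasurable]

lemma lintegral_le_ofReal_of_cover {ι : Type*} {s : Finset ι} {A : ι → Set X} {B : Set X}
    {f : X → ℝ≥0∞} {F m : ι → ℝ} {b n : ℝ} (hF : ∀ i ∈ s, 0 ≤ F i) (hm : ∀ i ∈ s, 0 ≤ m i)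
    (hb : 0 ≤ b) (hn : 0 ≤ n) (hA : ∀ i ∈ s, μ (A i) ≤ ENNReal.ofReal (m i))
    (hB : μ B ≤ ENNReal.ofReal n)
    (hf : ∀ x, f x ≠ 0 →
      (∃ i ∈ s, x ∈ A i ∧ f x ≤ ENNReal.ofReal (F i)) ∨ x ∈ B ∧ f x ≤ ENNReal.ofReal b) :
    ∫⁻ x, f x ∂μ ≤ ENNReal.ofReal (∑ i ∈ s, F i * m i + b * n) := by
  have hFm : ∀ i ∈ s, 0 ≤ F i * m i := fun i hi ↦ mul_nonneg (hF i hi) (hm i hi)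
  rw [ENNReal.ofReal_add (Finset.sum_nonneg hFm) (by positivity),
    ENNReal.ofReal_sum_of_nonneg hFm, ENNReal.ofReal_mul hb]
  refine (lintegral_le_sum_add_of_cover hf).trans ?_
  gcongr with i hi
  rw [ENNReal.ofReal_mul (hF i hi)]
  gcongr
  exact hA i hi

end MeasureTheory

section PadicIntegers

open PadicInt IsUltrametricDist

/-- The real number `n^{-1/2}`. For `n = p` prime, its even powers are the absolute values of the
nonzero elements of `ℤ_p`. -/
def invSqrt (n : ℕ) : ℝ := (√n)⁻¹

lemma invSqrt_sq (n : ℕ) : invSqrt n ^ 2 = (n : ℝ)⁻¹ := by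
  rw [invSqrt, inv_pow, Real.sq_sqrt n.cast_nonneg]

lemma rpow_neg_half_natCast (a n : ℕ) : (a : ℝ) ^ (-(n / 2) : ℝ) = invSqrt a ^ n := by
  rw [invSqrt, Real.sqrt_eq_rpow, ← Real.rpow_neg a.cast_nonneg, ← Real.rpow_natCast,
    ← Real.rpow_mul a.cast_nonneg]
  ring_nf

lemma norm_sub_le_max {S : Type*} [SeminormedAddGroup S] [IsUltrametricDist S] (x y : S) :
    ‖x - y‖ ≤ max ‖x‖ ‖y‖ := by
  simpa [sub_eq_add_neg] using norm_add_le_max x (-y)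

lemma norm_eq_of_norm_sub_lt {S : Type*} [SeminormedAddGroup S] [IsUltrametricDist S] {x y : S}
    (h : ‖x - y‖ < ‖y‖) : ‖x‖ = ‖y‖ := by
  rw [← norm_neg y]
  refine norm_eq_of_add_norm_lt_max ?_
  rw [← sub_eq_add_neg, norm_neg]
  exact h.trans_le (le_max_right _ _)

/-- The Haar probability measure on `ℤ_p`, as a default measure. -/
instance (p : ℕ) [Fact p.Prime] : MeasureSpace ℤ_[p] where
  volume := Measure.addHaarMeasure ⊤

variable {p : ℕ} [hp : Fact p.Prime]

local notation "ρ" => invSqrt p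

instance : (volume : Measure ℤ_[p]).IsAddHaarMeasure :=
  inferInstanceAs (Measure.addHaarMeasure _).IsAddHaarMeasure

instance : IsProbabilityMeasure (volume : Measure ℤ_[p]) :=
  ⟨Measure.addHaarMeasure_self (K₀ := ⊤)⟩

variable (p) in
lemma invSqrt_pos : 0 < ρ := by
  have := hp.out.pos
  unfold invSqrt
  positivity

variable (p) in
lemma invSqrt_le : ρ ≤ 3 / 4 := by
  have htwo : (p : ℝ)⁻¹ ≤ 2⁻¹ := inv_anti₀ two_pos (by exact_mod_cast hp.out.two_le)
  nlinarith [invSqrt_sq p, invSqrt_pos p]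

variable (p) in
lemma invSqrt_lt_one : ρ < 1 := (invSqrt_le p).trans_lt (by norm_num)

lemma invSqrt_pow_le_pow_iff {m n : ℕ} : ρ ^ m ≤ ρ ^ n ↔ n ≤ m :=
  pow_le_pow_iff_right_of_lt_one₀ (invSqrt_pos p) (invSqrt_lt_one p)

lemma invSqrt_pow_le_one (n : ℕ) : ρ ^ n ≤ 1 :=
  pow_le_one₀ (invSqrt_pos p).le (invSqrt_lt_one p).le

lemma norm_natCast_pow (n : ℕ) : ‖(p : ℤ_[p]) ^ n‖ = ρ ^ (2 * n) := by
  rw [norm_pow, norm_p, pow_mul, invSqrt_sq]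

lemma exists_norm_eq_invSqrt_pow {x : ℤ_[p]} (hx : x ≠ 0) : ∃ n : ℕ, ‖x‖ = ρ ^ (2 * n) :=
  ⟨x.valuation, by rw [← norm_natCast_pow, norm_p_pow, norm_eq_zpow_neg_valuation hx]⟩

lemma norm_le_norm_iff_dvd {x y : ℤ_[p]} : ‖x‖ ≤ ‖y‖ ↔ y ∣ x := by
  refine ⟨fun h ↦ ?_, fun ⟨z, hz⟩ ↦ ?_⟩
  · rcases eq_or_ne y 0 with rfl | hy
    · simpa using h
    have hy' : (y : ℚ_[p]) ≠ 0 := coe_ne_zero.2 hy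
    refine ⟨⟨x / y, ?_⟩, PadicInt.ext (mul_div_cancel₀ (x : ℚ_[p]) hy').symm⟩
    rw [norm_div]
    exact div_le_one_of_le₀ h (norm_nonneg _)
  · rw [hz, norm_mul]
    exact mul_le_of_le_one_right (norm_nonneg y) (norm_le_one z)

lemma norm_le_invSqrt_pow_iff_dvd {x : ℤ_[p]} {n : ℕ} :
    ‖x‖ ≤ ρ ^ (2 * n) ↔ (p : ℤ_[p]) ^ n ∣ x := by
  rw [← norm_natCast_pow, norm_le_norm_iff_dvd]

lemma inv_natCast_le_norm (n : ℕ) : (n : ℝ)⁻¹ ≤ ‖(n : ℤ_[p])‖ := by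
  rcases eq_or_ne n 0 with rfl | hn
  · simp
  have hdvd : p ^ (n : ℤ_[p]).valuation ∣ n := by
    have := (norm_int_le_pow_iff_dvd (p := p) (k := n)).1
      (norm_eq_zpow_neg_valuation (Nat.cast_ne_zero.2 hn)).le
    exact_mod_cast this
  rw [norm_eq_zpow_neg_valuation (Nat.cast_ne_zero.2 hn), zpow_neg, zpow_natCast]
  exact inv_anti₀ (by exact_mod_cast pow_pos hp.out.pos _)
    (by exact_mod_cast Nat.le_of_dvd (Nat.pos_of_ne_zero hn) hdvd)

lemma volume_norm_le_invSqrt_pow (n : ℕ) :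
    volume {x : ℤ_[p] | ‖x‖ ≤ ρ ^ (2 * n)} = ENNReal.ofReal (ρ ^ (2 * n)) := by
  let H := (toZModPow n : ℤ_[p] →+* ZMod (p ^ n)).toAddMonoidHom.ker
  have hH : (H : Set ℤ_[p]) = {x | ‖x‖ ≤ ρ ^ (2 * n)} := by
    ext x
    change x ∈ RingHom.ker (toZModPow n) ↔ _
    rw [ker_toZModPow, Ideal.mem_span_singleton, mem_ofPred_eq, norm_le_invSqrt_pow_iff_dvd]
  have hpn : p ^ n ≠ 0 := pow_ne_zero n hp.out.ne_zero
  have : NeZero (p ^ n) := ⟨hpn⟩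
  have hindex : H.index = p ^ n := by
    rw [AddSubgroup.index_ker, AddMonoidHom.range_eq_top.2 (ZMod.ringHom_surjective _)]
    simp
  have : H.FiniteIndex := ⟨by rwa [hindex]⟩
  have hmeas : MeasurableSet (H : Set ℤ_[p]) := by
    rw [hH]
    exact (isClosed_le continuous_norm continuous_const).measurableSet
  have hmul := AddSubgroup.index_mul_measure H hmeas volume
  rw [hindex, measure_univ, hH, mul_comm] at hmul
  rw [ENNReal.eq_inv_of_mul_eq_one_left hmul, pow_mul, invSqrt_sq, inv_pow,
    ENNReal.ofReal_inv_of_pos (by exact_mod_cast pow_pos hp.out.pos n)]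
  norm_cast

lemma volume_norm_sub_le (a : ℤ_[p]) {ε : ℝ} (hε : 0 < ε) :
    volume {x : ℤ_[p] | ‖x - a‖ ≤ ε} ≤ ENNReal.ofReal ε := by
  classical
  have htranslate : volume {x : ℤ_[p] | ‖x - a‖ ≤ ε} = volume {x : ℤ_[p] | ‖x‖ ≤ ε} := by
    simpa [sub_eq_add_neg] using measure_preimage_add_right volume (-a) {x : ℤ_[p] | ‖x‖ ≤ ε}
  rw [htranslate]
  have hex : ∃ n, ρ ^ (2 * n) ≤ ε := by
    obtain ⟨n, hn⟩ := exists_pow_lt_of_lt_one hε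
      (pow_lt_one₀ (invSqrt_pos p).le (invSqrt_lt_one p) two_ne_zero)
    exact ⟨n, by rw [pow_mul]; exact hn.le⟩
  refine le_trans (measure_mono fun x hx ↦ ?_) <|
    (volume_norm_le_invSqrt_pow (Nat.find hex)).le.trans
      (ENNReal.ofReal_le_ofReal (Nat.find_spec hex))
  rcases eq_or_ne x 0 with rfl | hx0
  · simpa using pow_nonneg (invSqrt_pos p).le _
  obtain ⟨m, hm⟩ := exists_norm_eq_invSqrt_pow hx0
  rw [mem_ofPred_eq, hm, invSqrt_pow_le_pow_iff, mul_le_mul_iff_right₀ two_pos]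
  exact Nat.find_min' hex (hm ▸ hx)

lemma volume_range_mulLeft {α : ℤ_[p]} (hα : α ≠ 0) :
    volume (range (AddMonoidHom.mulLeft α)) = ENNReal.ofReal ‖α‖ := by
  obtain ⟨n, hn⟩ := exists_norm_eq_invSqrt_pow hα
  rw [hn, ← volume_norm_le_invSqrt_pow, ← hn]
  congr 1
  ext x
  rw [mem_ofPred_eq, norm_le_norm_iff_dvd]
  exact exists_congr fun y ↦ eq_comm

lemma map_affine_volume_le {α : ℤ_[p]} (hα : α ≠ 0) (β : ℤ_[p]) :
    (volume : Measure ℤ_[p]).map (fun x ↦ α * x + β) ≤ ENNReal.ofReal ‖α‖⁻¹ • volume := by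
  refine Measure.le_iff.2 fun S hS ↦ ?_
  rw [Measure.map_apply (by fun_prop) hS]
  set T : Set ℤ_[p] := (fun x ↦ α * x + β) ⁻¹' S
  have himage : volume (AddMonoidHom.mulLeft α '' T) ≤ volume S := by
    rw [← measure_preimage_add_right volume β S]
    exact measure_mono (image_subset_iff.2 fun x hx ↦ hx)
  rw [measure_image_addMonoidHom volume volume (continuous_const_mul α) (mul_right_injective₀ hα),
    volume_range_mulLeft hα] at himage
  calc volume T = ENNReal.ofReal ‖α‖⁻¹ * (ENNReal.ofReal ‖α‖ * volume T) := by
        rw [← mul_assoc, ← ENNReal.ofReal_mul (by positivity),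
          inv_mul_cancel₀ (norm_ne_zero_iff.2 hα), ENNReal.ofReal_one, one_mul]
    _ ≤ ENNReal.ofReal ‖α‖⁻¹ * volume S := by gcongr

lemma norm_le_or_exists_norm_eq (x : ℤ_[p]) (N : ℕ) :
    ‖x‖ ≤ ρ ^ (2 * N) ∨ ∃ t < N, ‖x‖ = ρ ^ (2 * t) := by
  rcases eq_or_ne x 0 with rfl | hx
  · exact .inl (by simpa using pow_nonneg (invSqrt_pos p).le _)
  obtain ⟨t, ht⟩ := exists_norm_eq_invSqrt_pow hx
  rcases lt_or_ge t N with htN | htN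
  · exact .inr ⟨t, htN, ht⟩
  · exact .inl (ht ▸ invSqrt_pow_le_pow_iff.2 (by gcongr))

lemma norm_le_or_norm_le_of_norm_mul_le {x y : ℤ_[p]} {n : ℕ} (h : ‖x * y‖ ≤ ρ ^ (2 * n)) :
    ‖x‖ ≤ ρ ^ (2 * ((n + 1) / 2)) ∨ ‖y‖ ≤ ρ ^ (2 * ((n + 1) / 2)) := by
  rcases norm_le_or_exists_norm_eq x ((n + 1) / 2) with hx | ⟨a, ha, hx⟩
  · exact .inl hx
  rcases norm_le_or_exists_norm_eq y ((n + 1) / 2) with hy | ⟨b, hb, hy⟩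
  · exact .inr hy
  rw [norm_mul, hx, hy, ← pow_add, invSqrt_pow_le_pow_iff] at h
  omega

lemma norm_le_of_norm_cube_le {x : ℤ_[p]} {n : ℕ} (h : ‖x ^ 3‖ ≤ ρ ^ (2 * n)) :
    ‖x‖ ≤ ρ ^ (2 * ((n + 2) / 3)) := by
  rcases norm_le_or_exists_norm_eq x ((n + 2) / 3) with hx | ⟨a, ha, hx⟩
  · exact hx
  rw [norm_pow, hx, ← pow_mul, invSqrt_pow_le_pow_iff] at h
  omega

lemma norm_sub_le_or_norm_add_le_of_norm_sq_sub_sq_le {x a : ℤ_[p]} {ε δ : ℝ}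
    (h : ‖x ^ 2 - a ^ 2‖ ≤ ε) (hδ : 0 < δ) (ha : δ ≤ ‖2 * a‖) :
    ‖x - a‖ ≤ ε / δ ∨ ‖x + a‖ ≤ ε / δ := by
  have hfactor : ‖x + a‖ * ‖x - a‖ ≤ ε := by rwa [← norm_mul, ← sq_sub_sq]
  have hmax : δ ≤ max ‖x + a‖ ‖x - a‖ := by
    refine ha.trans ?_
    rw [show 2 * a = (x + a) - (x - a) by ring]
    exact norm_sub_le_max _ _
  rw [le_div_iff₀ hδ, le_div_iff₀ hδ]
  rcases le_max_iff.1 hmax with hadd | hsub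
  · exact .inl (by nlinarith [norm_nonneg (x - a)])
  · exact .inr (by nlinarith [norm_nonneg (x + a)])

lemma volume_natCast_mul_mem_le {n : ℕ} (hn : n ≠ 0) (S : Set ℤ_[p]) :
    volume {x : ℤ_[p] | n * x ∈ S} ≤ n * volume S := by
  have hn' : (n : ℤ_[p]) ≠ 0 := Nat.cast_ne_zero.2 hn
  have hmap := map_affine_volume_le hn' 0
  simp only [add_zero] at hmap
  refine (Measure.le_map_apply (by fun_prop) S).trans ((hmap S).trans ?_)
  rw [Measure.smul_apply, smul_eq_mul, ← ENNReal.ofReal_natCast n]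
  gcongr
  exact inv_le_of_inv_le₀ (by positivity) (inv_natCast_le_norm n)

lemma volume_natCast_mul_mem_le_ofReal {n : ℕ} (hn : n ≠ 0) {S : Set ℤ_[p]} {c : ℝ}
    (hS : volume S ≤ ENNReal.ofReal c) :
    volume {x : ℤ_[p] | n * x ∈ S} ≤ ENNReal.ofReal (n * c) := by
  rw [ENNReal.ofReal_mul n.cast_nonneg, ENNReal.ofReal_natCast]
  exact (volume_natCast_mul_mem_le hn S).trans (by gcongr)

section SquareRoots

/-! ### Approximate square roots -/

lemma volume_norm_sq_sub_le_of_forall {γ : ℤ_[p]} {ε η : ℝ} (hη : 0 < η)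
    (h : ∀ r s : ℤ_[p], ‖s ^ 2 - γ‖ ≤ ε → ‖r ^ 2 - s ^ 2‖ ≤ ε → ‖r - s‖ ≤ η ∨ ‖r + s‖ ≤ η) :
    volume {r : ℤ_[p] | ‖r ^ 2 - γ‖ ≤ ε} ≤ ENNReal.ofReal (2 * η) := by
  rcases eq_empty_or_nonempty {r : ℤ_[p] | ‖r ^ 2 - γ‖ ≤ ε} with hempty | ⟨s, hs⟩
  · simp [hempty]
  have hsub : {r : ℤ_[p] | ‖r ^ 2 - γ‖ ≤ ε} ⊆ {r | ‖r - s‖ ≤ η} ∪ {r | ‖r - -s‖ ≤ η} := by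
    intro r hr
    simp only [mem_union, mem_ofPred_eq, sub_neg_eq_add]
    refine h r s hs ?_
    rw [← sub_sub_sub_cancel_right _ _ γ]
    exact (norm_sub_le_max _ _).trans (max_le hr hs)
  refine (measure_mono hsub).trans ((measure_union_le _ _).trans ?_)
  rw [two_mul, ENNReal.ofReal_add hη.le hη.le]
  exact add_le_add (volume_norm_sub_le s hη) (volume_norm_sub_le (-s) hη)

lemma volume_norm_sq_sub_le {γ : ℤ_[p]} {ε δ : ℝ} (hε : 0 < ε) (hδ : 0 < δ) (hγ : δ ^ 2 ≤ ‖γ‖) :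
    volume {r : ℤ_[p] | ‖r ^ 2 - γ‖ ≤ ε} ≤ ENNReal.ofReal (4 * ε / δ) := by
  rw [show 4 * ε / δ = 2 * (ε / (δ / 2)) by field_simp; norm_num]
  refine volume_norm_sq_sub_le_of_forall (by positivity) fun r s hs hrs ↦ ?_
  rcases le_or_gt ‖γ‖ ε with hγε | hεγ
  · have hs' : ‖s ^ 2‖ ≤ ε := by simpa using (norm_add_le_max _ _).trans (max_le hs hγε)
    have hr' : ‖r ^ 2‖ ≤ ε := by simpa using (norm_add_le_max _ _).trans (max_le hrs hs')
    have hsqrt {x : ℤ_[p]} (hx : ‖x ^ 2‖ ≤ ε) : ‖x‖ ≤ ε / (δ / 2) := by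
      rw [norm_pow] at hx
      rw [le_div_iff₀ (by positivity)]
      nlinarith [abs_le_of_sq_le_sq' (by nlinarith : (‖x‖ * δ) ^ 2 ≤ ε ^ 2) hε.le, norm_nonneg x]
    exact .inl ((norm_sub_le_max _ _).trans (max_le (hsqrt hr') (hsqrt hs')))
  · have hs' : δ ≤ ‖s‖ := by
      rw [← norm_eq_of_norm_sub_lt (hs.trans_lt hεγ), norm_pow] at hγ
      exact le_of_sq_le_sq hγ (norm_nonneg s)
    refine norm_sub_le_or_norm_add_le_of_norm_sq_sub_sq_le hrs (by positivity) ?_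
    have htwo : (2 : ℝ)⁻¹ ≤ ‖(2 : ℤ_[p])‖ := by exact_mod_cast inv_natCast_le_norm (p := p) 2
    rw [norm_mul]
    nlinarith

lemma volume_norm_sq_sub_le_invSqrt_pow (γ : ℤ_[p]) (n : ℕ) :
    volume {r : ℤ_[p] | ‖r ^ 2 - γ‖ ≤ ρ ^ (2 * n)} ≤
      ENNReal.ofReal (2 * ρ ^ (2 * ((n + 1) / 2))) := by
  refine volume_norm_sq_sub_le_of_forall (pow_pos (invSqrt_pos p) _) fun r s _ hrs ↦ ?_
  rw [sq_sub_sq] at hrs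
  exact (norm_le_or_norm_le_of_norm_mul_le hrs).symm

end SquareRoots

section PlaneCubics

/-! ### Neighbourhoods of singular plane cubics -/

lemma volume_prod_norm_le_eq_lintegral {F : ℤ_[p] × ℤ_[p] → ℤ_[p]} (hF : Continuous F) (ε : ℝ) :
    volume {q | ‖F q‖ ≤ ε} = ∫⁻ h, volume {r | ‖F (h, r)‖ ≤ ε} :=
  Measure.prod_apply (isClosed_le hF.norm continuous_const).measurableSet

lemma sq_min_mul_norm_sub_le (α β h : ℤ_[p]) :
    min ‖h - α‖ ‖h - β‖ ^ 2 * ‖α - β‖ ≤ ‖(h - α) ^ 2 * (h - β)‖ := by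
  have hmax : ‖α - β‖ ≤ max ‖h - β‖ ‖h - α‖ := by
    rw [show α - β = (h - β) - (h - α) by ring]
    exact norm_sub_le_max _ _
  rw [norm_mul, norm_pow]
  rcases le_total ‖h - α‖ ‖h - β‖ with hle | hle
  · rw [max_eq_left hle] at hmax
    rw [min_eq_left hle]
    gcongr
  · rw [max_eq_right hle] at hmax
    calc min ‖h - α‖ ‖h - β‖ ^ 2 * ‖α - β‖ = ‖h - β‖ * ‖α - β‖ * ‖h - β‖ := by
          rw [min_eq_right hle]
          ring
      _ ≤ ‖h - α‖ * ‖h - α‖ * ‖h - β‖ := by gcongr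
      _ = ‖h - α‖ ^ 2 * ‖h - β‖ := by ring

lemma volume_min_norm_sub_le (α β : ℤ_[p]) {η : ℝ} (hη : 0 < η) :
    volume {h : ℤ_[p] | min ‖h - α‖ ‖h - β‖ ≤ η} ≤ ENNReal.ofReal (2 * η) := by
  simp only [min_le_iff, ofPred_or]
  rw [two_mul, ENNReal.ofReal_add hη.le hη.le]
  exact (measure_union_le _ _).trans
    (add_le_add (volume_norm_sub_le α hη) (volume_norm_sub_le β hη))

lemma volume_nodalCubic_le {α β : ℤ_[p]} {ε δ : ℝ} (hε : 0 < ε) (hδ : 0 < δ)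
    (hαβ : δ ^ 2 ≤ ‖α - β‖) (N : ℕ) :
    volume {q : ℤ_[p] × ℤ_[p] | ‖q.2 ^ 2 + (q.1 - α) ^ 2 * (q.1 - β)‖ ≤ ε} ≤
      ENNReal.ofReal (8 * N * ε / δ + 2 * ρ ^ (2 * N)) := by
  have hρ := invSqrt_pos p
  rw [volume_prod_norm_le_eq_lintegral (by fun_prop)]
  have hcover := lintegral_le_ofReal_of_cover (μ := volume) (s := Finset.range N)
    (f := fun h ↦ volume {r : ℤ_[p] | ‖r ^ 2 + (h - α) ^ 2 * (h - β)‖ ≤ ε})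
    (A := fun t ↦ {h | min ‖h - α‖ ‖h - β‖ ≤ ρ ^ (2 * t)}) (m := fun t ↦ 2 * ρ ^ (2 * t))
    (F := fun t ↦ 4 * ε / (ρ ^ (2 * t) * δ))
    (B := {h | min ‖h - α‖ ‖h - β‖ ≤ ρ ^ (2 * N)}) (n := 2 * ρ ^ (2 * N)) (b := 1)
    (fun _ _ ↦ by positivity) (fun _ _ ↦ by positivity) zero_le_one (by positivity)
    (fun _ _ ↦ volume_min_norm_sub_le α β (by positivity))
    (volume_min_norm_sub_le α β (by positivity)) fun h _ ↦ ?_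
  · refine hcover.trans_eq (congrArg ENNReal.ofReal ?_)
    have hterm (t : ℕ) : 4 * ε / (ρ ^ (2 * t) * δ) * (2 * ρ ^ (2 * t)) = 8 * ε / δ := by
      field_simp
      norm_num
    simp only [hterm, Finset.sum_const, Finset.card_range, nsmul_eq_mul, one_mul]
    ring
  · have hmin : min ‖h - α‖ ‖h - β‖ ≤ ρ ^ (2 * N) ∨
        ∃ t < N, min ‖h - α‖ ‖h - β‖ = ρ ^ (2 * t) := by
      rcases min_choice ‖h - α‖ ‖h - β‖ with heq | heq <;> rw [heq] <;>
        exact norm_le_or_exists_norm_eq _ N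
    rcases hmin with hle | ⟨t, htN, ht⟩
    · exact .inr ⟨hle, by simpa using prob_le_one⟩
    · refine .inl ⟨t, Finset.mem_range.2 htN, ht.le, ?_⟩
      simp only [← sub_neg_eq_add (_ ^ 2)]
      refine volume_norm_sq_sub_le hε (by positivity) ?_
      rw [norm_neg, mul_pow, ← ht]
      exact (mul_le_mul_of_nonneg_left hαβ (by positivity)).trans (sq_min_mul_norm_sub_le α β h)

lemma sum_range_inv_pow_le {v : ℝ} (h0 : 0 < v) (h1 : v ≤ 3 / 4) (N : ℕ) :
    ∑ t ∈ Finset.range N, (v ^ t)⁻¹ ≤ 4 * v / v ^ N := by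
  induction N with
  | zero => simpa using h0.le
  | succ n ih =>
    rw [Finset.sum_range_succ]
    calc ∑ t ∈ Finset.range n, (v ^ t)⁻¹ + (v ^ n)⁻¹ ≤ 4 * v / v ^ n + (v ^ n)⁻¹ := by gcongr
      _ = (4 * v + 1) / v ^ n := by ring
      _ ≤ 4 / v ^ n := by gcongr; linarith
      _ = 4 * v / v ^ (n + 1) := by rw [pow_succ]; field_simp

lemma invSqrt_pow_le_norm_mul_sub {h c : ℤ_[p]} {t : ℕ} (hh : ‖2 * h‖ = ρ ^ (2 * t))
    (hc : ‖c‖ < ρ ^ (4 * t)) : (ρ ^ (3 * t)) ^ 2 ≤ ‖h * ((2 * h) ^ 2 - c)‖ := by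
  have hρ := invSqrt_pos p
  have hsq : ‖(2 * h) ^ 2‖ = ρ ^ (4 * t) := by rw [norm_pow, hh, ← pow_mul]; ring_nf
  have hsub : ‖(2 * h) ^ 2 - c‖ = ρ ^ (4 * t) := by
    rw [← hsq]
    refine norm_eq_of_norm_sub_lt ?_
    rwa [sub_sub_cancel_left, norm_neg, hsq]
  have hle : ρ ^ (2 * t) ≤ ‖h‖ := hh ▸ norm_le_norm_iff_dvd.2 (dvd_mul_left h 2)
  calc (ρ ^ (3 * t)) ^ 2 = ρ ^ (2 * t) * ρ ^ (4 * t) := by rw [← pow_mul, ← pow_add]; ring_nf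
    _ ≤ ‖h * ((2 * h) ^ 2 - c)‖ := by rw [norm_mul, hsub]; gcongr

lemma volume_nearCuspidalCubic_le (n : ℕ) {N : ℕ} {c : ℤ_[p]} (hc : ∀ t < N, ‖c‖ < ρ ^ (4 * t)) :
    volume {q : ℤ_[p] × ℤ_[p] | ‖(2 * q.2) ^ 2 + q.1 * ((2 * q.1) ^ 2 - c)‖ ≤ ρ ^ (2 * n)} ≤
      ENNReal.ofReal (64 * ρ ^ (2 * n + 1) / ρ ^ N + 8 * ρ ^ (2 * N + 2 * ((n + 1) / 2))) := by
  have hρ := invSqrt_pos p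
  rw [volume_prod_norm_le_eq_lintegral (by fun_prop)]
  have hball (t : ℕ) : volume {h : ℤ_[p] | ‖2 * h‖ ≤ ρ ^ (2 * t)} ≤
      ENNReal.ofReal (2 * ρ ^ (2 * t)) := by
    exact_mod_cast volume_natCast_mul_mem_le_ofReal two_ne_zero (volume_norm_le_invSqrt_pow t).le
  have hcover := lintegral_le_ofReal_of_cover (μ := volume) (s := Finset.range N)
    (f := fun h ↦ volume {r : ℤ_[p] | ‖(2 * r) ^ 2 + h * ((2 * h) ^ 2 - c)‖ ≤ ρ ^ (2 * n)})
    (A := fun t ↦ {h | ‖2 * h‖ ≤ ρ ^ (2 * t)}) (m := fun t ↦ 2 * ρ ^ (2 * t))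
    (F := fun t ↦ 2 * (4 * ρ ^ (2 * n) / ρ ^ (3 * t)))
    (B := {h | ‖2 * h‖ ≤ ρ ^ (2 * N)}) (n := 2 * ρ ^ (2 * N))
    (b := 2 * (2 * ρ ^ (2 * ((n + 1) / 2))))
    (fun _ _ ↦ by positivity) (fun _ _ ↦ by positivity) (by positivity) (by positivity)
    (fun t _ ↦ hball t) (hball N) fun h _ ↦ ?_
  · refine hcover.trans (ENNReal.ofReal_le_ofReal ?_)
    have hterm (t : ℕ) : 2 * (4 * ρ ^ (2 * n) / ρ ^ (3 * t)) * (2 * ρ ^ (2 * t)) =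
        16 * ρ ^ (2 * n) * (ρ ^ t)⁻¹ := by
      field_simp
      ring
    simp only [hterm, ← Finset.mul_sum]
    calc _ ≤ 16 * ρ ^ (2 * n) * (4 * ρ / ρ ^ N) +
          2 * (2 * ρ ^ (2 * ((n + 1) / 2))) * (2 * ρ ^ (2 * N)) := by
          gcongr
          exact sum_range_inv_pow_le hρ (invSqrt_le p) N
      _ = _ := by ring
  · have hdouble {b : ℝ}
        (hb : volume {x | ‖x ^ 2 - -(h * ((2 * h) ^ 2 - c))‖ ≤ ρ ^ (2 * n)} ≤ ENNReal.ofReal b) :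
        volume {r | ‖(2 * r) ^ 2 + h * ((2 * h) ^ 2 - c)‖ ≤ ρ ^ (2 * n)} ≤
          ENNReal.ofReal (2 * b) := by
      simp only [sub_neg_eq_add] at hb
      exact_mod_cast volume_natCast_mul_mem_le_ofReal two_ne_zero hb
    rcases norm_le_or_exists_norm_eq (2 * h) N with hle | ⟨t, htN, ht⟩
    · exact .inr ⟨hle, hdouble (volume_norm_sq_sub_le_invSqrt_pow _ n)⟩
    · refine .inl ⟨t, Finset.mem_range.2 htN, ht.le, hdouble ?_⟩
      refine volume_norm_sq_sub_le (by positivity) (by positivity) ?_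
      rw [norm_neg]
      exact invSqrt_pow_le_norm_mul_sub ht (hc t htN)

end PlaneCubics

section SeminvariantDiscriminant

/-! ### The discriminant in terms of seminvariants -/

/-- The quantity `4i³ - j²` with `j = r² + h³ - 3ih`. When `h`, `r` are the two leading
seminvariants of a quartic form and `i` its invariant `I`, all suitably scaled by powers of the
leading coefficient, `j` is the corresponding multiple of `J`, by the classical syzygy, so that this
is a multiple of the discriminant. -/
def seminvariantDisc {R : Type*} [CommRing R] (h r i : R) : R :=
  4 * i ^ 3 - (r ^ 2 + h ^ 3 - 3 * i * h) ^ 2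

lemma continuous_seminvariantDisc :
    Continuous fun q : (ℤ_[p] × ℤ_[p]) × ℤ_[p] ↦ seminvariantDisc q.1.1 q.1.2 q.2 := by
  unfold seminvariantDisc
  fun_prop

lemma norm_four_mul_le_of_norm_cube_le {i : ℤ_[p]} {k : ℕ} (hi : ‖16 * i ^ 3‖ ≤ ρ ^ (4 * k)) :
    ‖4 * i‖ ≤ ρ ^ (2 * ((2 * k + 2) / 3)) := by
  refine norm_le_of_norm_cube_le ((norm_le_norm_iff_dvd.2 ⟨4, ?_⟩).trans (hi.trans_eq ?_))
  · ring
  · ring_nf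

lemma volume_seminvariantDisc_le_of_norm_cube_le {i : ℤ_[p]} {k : ℕ}
    (hi : ‖16 * i ^ 3‖ ≤ ρ ^ (4 * k)) :
    volume {q : ℤ_[p] × ℤ_[p] | ‖seminvariantDisc q.1 q.2 i‖ ≤ ρ ^ (4 * k)} ≤
      ENNReal.ofReal (64 * ρ ^ (2 * k + 1) / ρ ^ (((2 * k + 2) / 3 + 1) / 2) +
        8 * ρ ^ (2 * (((2 * k + 2) / 3 + 1) / 2) + 2 * ((k + 1) / 2))) := by
  have hi' : ∀ t < ((2 * k + 2) / 3 + 1) / 2, ‖12 * i‖ < ρ ^ (4 * t) := fun t ht ↦ by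
    refine (norm_le_norm_iff_dvd.2 ⟨3, by ring⟩).trans_lt
      ((norm_four_mul_le_of_norm_cube_le hi).trans_lt ?_)
    exact pow_lt_pow_right_of_lt_one₀ (invSqrt_pos p) (invSqrt_lt_one p) (by omega)
  refine (measure_mono fun q hq ↦ ?_).trans (volume_nearCuspidalCubic_le k hi')
  set j := q.2 ^ 2 + q.1 ^ 3 - 3 * i * q.1
  have hj : ‖2 * j‖ ≤ ρ ^ (2 * k) := by
    refine le_of_sq_le_sq ?_ (pow_nonneg (invSqrt_pos p).le _)
    rw [← norm_pow, ← pow_mul, show (2 * j) ^ 2 = 16 * i ^ 3 - 4 * (4 * i ^ 3 - j ^ 2) by ring,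
      show 2 * k * 2 = 4 * k by ring]
    refine (norm_sub_le_max _ _).trans (max_le hi (le_trans ?_ hq))
    exact norm_le_norm_iff_dvd.2 (dvd_mul_left _ _)
  refine (norm_le_norm_iff_dvd.2 ⟨2, ?_⟩).trans hj
  ring

lemma norm_nodalCubic_le_of_norm_seminvariantDisc_sq_le {h r w : ℤ_[p]} {m : ℕ} {ε : ℝ}
    (hw : ‖w‖ = ρ ^ (2 * m)) (hε : ‖seminvariantDisc h r (w ^ 2)‖ ≤ ε) :
    ‖r ^ 2 + (h - -w) ^ 2 * (h - 2 * w)‖ ≤ 4 * ε / ρ ^ (6 * m) ∨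
      ‖r ^ 2 + (h - - -w) ^ 2 * (h - 2 * -w)‖ ≤ 4 * ε / ρ ^ (6 * m) := by
  have hρ := invSqrt_pos p
  have hsq : ‖(r ^ 2 + h ^ 3 - 3 * w ^ 2 * h) ^ 2 - (2 * w ^ 3) ^ 2‖ ≤ ε := by
    rw [norm_sub_rev, mul_pow, ← pow_mul, mul_comm 3 2, pow_mul]
    norm_num1
    exact hε
  have hw3 : ρ ^ (6 * m) / 4 ≤ ‖2 * (2 * w ^ 3)‖ := by
    have hfour : (4 : ℝ)⁻¹ ≤ ‖(4 : ℤ_[p])‖ := by exact_mod_cast inv_natCast_le_norm (p := p) 4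
    rw [← mul_assoc, norm_mul, norm_pow, hw, ← pow_mul]
    norm_num1
    rw [show 2 * m * 3 = 6 * m by ring, div_eq_inv_mul]
    gcongr
  rw [show 4 * ε / ρ ^ (6 * m) = ε / (ρ ^ (6 * m) / 4) by field_simp,
    show r ^ 2 + (h - -w) ^ 2 * (h - 2 * w) = r ^ 2 + h ^ 3 - 3 * w ^ 2 * h - 2 * w ^ 3 by ring,
    show r ^ 2 + (h - - -w) ^ 2 * (h - 2 * -w) = r ^ 2 + h ^ 3 - 3 * w ^ 2 * h + 2 * w ^ 3 by ring]
  exact norm_sub_le_or_norm_add_le_of_norm_sq_sub_sq_le hsq (by positivity) hw3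

lemma volume_seminvariantDisc_sq_le {w : ℤ_[p]} {m : ℕ} (hw : ‖w‖ = ρ ^ (2 * m)) (k : ℕ) :
    volume {q : ℤ_[p] × ℤ_[p] | ‖seminvariantDisc q.1 q.2 (w ^ 2)‖ ≤ ρ ^ (4 * k)} ≤
      ENNReal.ofReal (260 * (k + 1) * ρ ^ (4 * k) / ρ ^ (7 * m)) := by
  have hρ := invSqrt_pos p
  let nodal (v : ℤ_[p]) : Set (ℤ_[p] × ℤ_[p]) :=
    {q | ‖q.2 ^ 2 + (q.1 - -v) ^ 2 * (q.1 - 2 * v)‖ ≤ 4 * ρ ^ (4 * k) / ρ ^ (6 * m)}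
  have hnodal {v : ℤ_[p]} (hv : ‖v‖ = ρ ^ (2 * m)) :
      volume (nodal v) ≤ ENNReal.ofReal (130 * (k + 1) * ρ ^ (4 * k) / ρ ^ (7 * m)) := by
    have hv' : (ρ ^ m / 2) ^ 2 ≤ ‖-v - 2 * v‖ := by
      have hthree : (3 : ℝ)⁻¹ ≤ ‖(3 : ℤ_[p])‖ := by exact_mod_cast inv_natCast_le_norm (p := p) 3
      rw [show -v - 2 * v = -(3 * v) by ring, norm_neg, norm_mul, hv, pow_mul']
      nlinarith [sq_nonneg (ρ ^ m)]
    refine (volume_nodalCubic_le (by positivity) (by positivity) hv' (2 * k)).trans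
      (ENNReal.ofReal_le_ofReal ?_)
    calc 8 * (2 * k : ℕ) * (4 * ρ ^ (4 * k) / ρ ^ (6 * m)) / (ρ ^ m / 2) + 2 * ρ ^ (2 * (2 * k))
        = 128 * k * (ρ ^ (4 * k) / ρ ^ (7 * m)) + 2 * ρ ^ (4 * k) := by
          push_cast
          field_simp
          ring
      _ ≤ 128 * k * (ρ ^ (4 * k) / ρ ^ (7 * m)) + 2 * (ρ ^ (4 * k) / ρ ^ (7 * m)) := by
          gcongr
          exact le_div_self (by positivity) (by positivity) (invSqrt_pow_le_one _)
      _ = (128 * k + 2) * ρ ^ (4 * k) / ρ ^ (7 * m) := by ring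
      _ ≤ 130 * (k + 1) * ρ ^ (4 * k) / ρ ^ (7 * m) := by
          gcongr
          linarith
  calc _ ≤ volume (nodal w ∪ nodal (-w)) := measure_mono fun q hq ↦
          norm_nodalCubic_le_of_norm_seminvariantDisc_sq_le hw hq
    _ ≤ volume (nodal w) + volume (nodal (-w)) := measure_union_le _ _
    _ ≤ _ := add_le_add (hnodal hw) (hnodal (by rwa [norm_neg]))
    _ = _ := by
      rw [← ENNReal.ofReal_add (by positivity) (by positivity)]
      ring_nf

lemma isSquare_of_norm_sq_sub_lt {y γ : ℤ_[p]} (h : ‖y ^ 2 - γ‖ < ‖2 * y‖ ^ 2) : IsSquare γ := by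
  obtain ⟨z, hz, -⟩ := hensels_lemma (p := p) (R := ℤ_[p])
    (F := (Polynomial.X ^ 2 - Polynomial.C γ : Polynomial ℤ_[p])) (a := y)
    (by simpa [one_add_one_eq_two] using h)
  rw [isSquare_iff_exists_sq]
  exact ⟨z, by simpa [sub_eq_zero, eq_comm] using hz⟩

lemma isSquare_of_isSquare_four_mul_cube {i : ℤ_[p]} (h : IsSquare (4 * i ^ 3)) : IsSquare i := by
  rcases eq_or_ne i 0 with rfl | hi
  · exact IsSquare.zero
  obtain ⟨y, hy⟩ := isSquare_iff_exists_sq _ |>.1 h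
  have hdvd : 2 * i ∣ y := by
    refine norm_le_norm_iff_dvd.1 (le_of_sq_le_sq ?_ (norm_nonneg _))
    rw [← norm_pow, ← norm_pow, ← hy]
    exact norm_le_norm_iff_dvd.2 ⟨i, by ring⟩
  obtain ⟨w, rfl⟩ := hdvd
  refine isSquare_iff_exists_sq _ |>.2 ⟨w, ?_⟩
  refine mul_left_cancel₀ (pow_ne_zero 2 (mul_ne_zero two_ne_zero hi)) ?_
  linear_combination hy

lemma isSquare_of_norm_four_mul_cube_sub_sq_lt {i y : ℤ_[p]}
    (h : ‖4 * i ^ 3 - y ^ 2‖ < ‖16 * i ^ 3‖) : IsSquare i := by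
  refine isSquare_of_isSquare_four_mul_cube (isSquare_of_norm_sq_sub_lt (y := y) ?_)
  have hy : ‖y ^ 2‖ = ‖4 * i ^ 3‖ := by
    refine norm_eq_of_norm_sub_lt ?_
    rw [norm_sub_rev]
    exact h.trans_le (norm_le_norm_iff_dvd.2 ⟨4, by ring⟩)
  rwa [norm_sub_rev, ← norm_pow, mul_pow, norm_mul, hy, ← norm_mul,
    show (2 : ℤ_[p]) ^ 2 * (4 * i ^ 3) = 16 * i ^ 3 by ring]

lemma volume_seminvariantDisc_fibre_le (k : ℕ) (i : ℤ_[p])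
    (h0 : volume {q : ℤ_[p] × ℤ_[p] | ‖seminvariantDisc q.1 q.2 i‖ ≤ ρ ^ (4 * k)} ≠ 0) :
    (∃ m < (k + 2) / 3, ‖i‖ ≤ ρ ^ (2 * (2 * m)) ∧
      volume {q : ℤ_[p] × ℤ_[p] | ‖seminvariantDisc q.1 q.2 i‖ ≤ ρ ^ (4 * k)} ≤
        ENNReal.ofReal (260 * (k + 1) * ρ ^ (4 * k) / ρ ^ (7 * m))) ∨
    ‖4 * i‖ ≤ ρ ^ (2 * ((2 * k + 2) / 3)) ∧
      volume {q : ℤ_[p] × ℤ_[p] | ‖seminvariantDisc q.1 q.2 i‖ ≤ ρ ^ (4 * k)} ≤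
        ENNReal.ofReal (64 * ρ ^ (2 * k + 1) / ρ ^ (((2 * k + 2) / 3 + 1) / 2) +
          8 * ρ ^ (2 * (((2 * k + 2) / 3 + 1) / 2) + 2 * ((k + 1) / 2))) := by
  rcases le_or_gt ‖16 * i ^ 3‖ (ρ ^ (4 * k)) with hi | hi
  · exact .inr ⟨norm_four_mul_le_of_norm_cube_le hi, volume_seminvariantDisc_le_of_norm_cube_le hi⟩
  obtain ⟨q, hq⟩ := nonempty_of_measure_ne_zero h0
  obtain ⟨w, rfl⟩ := isSquare_iff_exists_sq i |>.1
    (isSquare_of_norm_four_mul_cube_sub_sq_lt (hq.trans_lt hi))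
  have hw0 : w ≠ 0 := by
    rintro rfl
    simpa using hi.trans' (pow_pos (invSqrt_pos p) _)
  obtain ⟨m, hm⟩ := exists_norm_eq_invSqrt_pow hw0
  refine .inl ⟨m, ?_, ?_, volume_seminvariantDisc_sq_le hm k⟩
  · have hlt : ρ ^ (4 * k) < ρ ^ (12 * m) := by
      refine hi.trans_le ((norm_le_norm_iff_dvd.2 (dvd_mul_left _ 16)).trans_eq ?_)
      rw [norm_pow, norm_pow, hm]
      ring
    rw [← not_le, invSqrt_pow_le_pow_iff] at hlt
    omega
  · rw [norm_pow, hm]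
    exact le_of_eq (by ring)

/-- The exponent `E` such that the density of the quartic forms with `p ^ (2 * k) ∣ Δ` is
`O(k * p ^ (-E / 2))`. -/
def densityExponent (k : ℕ) : ℕ := if k = 1 then 4 else if k = 2 then 8 else 3 * k

variable (p) in
lemma sum_fibre_bounds_le (k : ℕ) :
    ∑ m ∈ Finset.range ((k + 2) / 3),
        260 * (k + 1) * ρ ^ (4 * k) / ρ ^ (7 * m) * ρ ^ (2 * (2 * m)) +
      (64 * ρ ^ (2 * k + 1) / ρ ^ (((2 * k + 2) / 3 + 1) / 2) +
          8 * ρ ^ (2 * (((2 * k + 2) / 3 + 1) / 2) + 2 * ((k + 1) / 2))) *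
        (4 * ρ ^ (2 * ((2 * k + 2) / 3))) ≤
      1400 * (k + 1) * ρ ^ densityExponent k := by
  have hρ := invSqrt_pos p
  have hcube : ρ ^ 3 ≤ 3 / 4 := (pow_le_of_le_one hρ.le (invSqrt_lt_one p).le three_ne_zero).trans
    (invSqrt_le p)
  have hgeom : ρ ^ (4 * k) * (ρ ^ 3 / (ρ ^ 3) ^ ((k + 2) / 3)) ≤ ρ ^ densityExponent k := by
    rw [← mul_div_assoc, div_le_iff₀ (by positivity), ← pow_mul, ← pow_add, ← pow_add,
      invSqrt_pow_le_pow_iff]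
    unfold densityExponent
    split_ifs <;> omega
  have hmain : ρ ^ (2 * k + 1) / ρ ^ (((2 * k + 2) / 3 + 1) / 2) * ρ ^ (2 * ((2 * k + 2) / 3)) ≤
      ρ ^ densityExponent k := by
    rw [div_mul_eq_mul_div, div_le_iff₀ (by positivity), ← pow_add, ← pow_add,
      invSqrt_pow_le_pow_iff]
    unfold densityExponent
    split_ifs <;> omega
  have htail : ρ ^ (2 * (((2 * k + 2) / 3 + 1) / 2) + 2 * ((k + 1) / 2)) *
      ρ ^ (2 * ((2 * k + 2) / 3)) ≤ ρ ^ densityExponent k := by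
    rw [← pow_add, invSqrt_pow_le_pow_iff]
    unfold densityExponent
    split_ifs <;> omega
  have hterm (m : ℕ) : 260 * (k + 1) * ρ ^ (4 * k) / ρ ^ (7 * m) * ρ ^ (2 * (2 * m)) =
      260 * (k + 1) * ρ ^ (4 * k) * ((ρ ^ 3) ^ m)⁻¹ := by
    field_simp
    ring
  simp only [hterm, ← Finset.mul_sum]
  calc _ ≤ 260 * (k + 1) * ρ ^ (4 * k) * (4 * ρ ^ 3 / (ρ ^ 3) ^ ((k + 2) / 3)) + _ := by
        gcongr
        exact sum_range_inv_pow_le (by positivity) hcube _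
    _ = 1040 * (k + 1) * (ρ ^ (4 * k) * (ρ ^ 3 / (ρ ^ 3) ^ ((k + 2) / 3))) +
        256 * (ρ ^ (2 * k + 1) / ρ ^ (((2 * k + 2) / 3 + 1) / 2) * ρ ^ (2 * ((2 * k + 2) / 3))) +
        32 * (ρ ^ (2 * (((2 * k + 2) / 3 + 1) / 2) + 2 * ((k + 1) / 2)) *
          ρ ^ (2 * ((2 * k + 2) / 3))) := by ring
    _ ≤ 1040 * (k + 1) * ρ ^ densityExponent k + 256 * ρ ^ densityExponent k +
        32 * ρ ^ densityExponent k := by gcongr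
    _ = (1040 * (k + 1) + 288) * ρ ^ densityExponent k := by ring
    _ ≤ 1400 * (k + 1) * ρ ^ densityExponent k := by
        gcongr
        linarith [(k.cast_nonneg : (0 : ℝ) ≤ k)]

variable (p) in
lemma volume_seminvariantDisc_le (k : ℕ) :
    volume {q : (ℤ_[p] × ℤ_[p]) × ℤ_[p] | ‖seminvariantDisc q.1.1 q.1.2 q.2‖ ≤ ρ ^ (4 * k)} ≤
      ENNReal.ofReal (1400 * (k + 1) * ρ ^ densityExponent k) := by
  have hρ := invSqrt_pos p
  have hfour (n : ℕ) : volume {i : ℤ_[p] | ‖4 * i‖ ≤ ρ ^ (2 * n)} ≤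
      ENNReal.ofReal (4 * ρ ^ (2 * n)) := by
    exact_mod_cast volume_natCast_mul_mem_le_ofReal four_ne_zero (volume_norm_le_invSqrt_pow n).le
  refine (Measure.prod_apply_symm (isClosed_le continuous_seminvariantDisc.norm
    continuous_const).measurableSet).trans_le ((lintegral_le_ofReal_of_cover
      (s := Finset.range ((k + 2) / 3)) (A := fun m ↦ {i : ℤ_[p] | ‖i‖ ≤ ρ ^ (2 * (2 * m))})
      (F := fun m ↦ 260 * (k + 1) * ρ ^ (4 * k) / ρ ^ (7 * m)) (m := fun m ↦ ρ ^ (2 * (2 * m)))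
      (B := {i : ℤ_[p] | ‖4 * i‖ ≤ ρ ^ (2 * ((2 * k + 2) / 3))}) (fun _ _ ↦ by positivity)
      (fun _ _ ↦ by positivity) (by positivity) (by positivity)
      (fun m _ ↦ (volume_norm_le_invSqrt_pow (2 * m)).le) (hfour _) fun i hi ↦ ?_).trans
    (ENNReal.ofReal_le_ofReal (sum_fibre_bounds_le p k)))
  simp only [Finset.mem_range]
  exact volume_seminvariantDisc_fibre_le k i hi

end SeminvariantDiscriminant

section ChangeOfVariables

/-! ### Passage to seminvariants -/

/-- The scaled seminvariants `3H`, `27R` and invariant `144a²I` of the quartic form with leading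
coefficients `a`, `b`, as a function of its remaining coefficients `((c, d), e)`. For fixed `a` and
`b` this is triangular, with affine components of slopes `24a`, `216a²` and `1728a³`. -/
def seminvariants {R : Type*} [CommRing R] (a b : R) (q : (R × R) × R) : (R × R) × R :=
  ((24 * a ^ 1 * q.1.1 + -9 * b ^ 2,
      216 * a ^ 2 * q.1.2 + (27 * b ^ 3 - 108 * a * b * q.1.1)),
    1728 * a ^ 3 * q.2 + 144 * a ^ 2 * (q.1.1 ^ 2 - 3 * b * q.1.2))

lemma seminvariantDisc_seminvariants {R : Type*} [CommRing R] (a b : R) (q : (R × R) × R) :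
    seminvariantDisc (seminvariants a b q).1.1 (seminvariants a b q).1.2 (seminvariants a b q).2 =
      80621568 * a ^ 6 * (BQ.mk a b q.1.1 q.1.2 q.2).disc := by
  simp only [seminvariantDisc, seminvariants, BQ.disc]
  ring

lemma map_natCast_mul_pow_affine_le {a : ℤ_[p]} (ha : ‖(24 : ℤ_[p])‖ ≤ ‖a‖) {n : ℕ} (hn : n ≠ 0)
    (m : ℕ) (β : ℤ_[p]) :
    (volume : Measure ℤ_[p]).map (fun x ↦ n * a ^ m * x + β) ≤
      ((n * 24 ^ m : ℕ) : ℝ≥0∞) • volume := by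
  have hslope : ((n * 24 ^ m : ℕ) : ℝ)⁻¹ ≤ ‖n * a ^ m‖ := by
    refine (inv_natCast_le_norm (p := p) _).trans ?_
    push_cast
    rw [norm_mul, norm_mul, norm_pow, norm_pow]
    gcongr
  have hpos : 0 < ‖n * a ^ m‖ := hslope.trans_lt' (by positivity)
  refine (map_affine_volume_le (norm_pos_iff.1 hpos) β).trans ?_
  rw [← ENNReal.ofReal_natCast]
  gcongr
  exact inv_le_of_inv_le₀ (by positivity) hslope

lemma map_seminvariants_le {a : ℤ_[p]} (ha : ‖(24 : ℤ_[p])‖ ≤ ‖a‖) (b : ℤ_[p]) :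
    (volume : Measure ((ℤ_[p] × ℤ_[p]) × ℤ_[p])).map (seminvariants a b) ≤
      ((24 ^ 6 * 8957952 : ℕ) : ℝ≥0∞) • volume := by
  have hc := map_natCast_mul_pow_affine_le ha (n := 24) (by norm_num) 1
  have hd := map_natCast_mul_pow_affine_le ha (n := 216) (by norm_num) 2
  have he := map_natCast_mul_pow_affine_le ha (n := 1728) (by norm_num) 3
  push_cast at hc hd he
  have hcd := map_prod_skew_le (by fun_prop) (by fun_prop) (hc (-9 * b ^ 2))
    fun c ↦ hd (27 * b ^ 3 - 108 * a * b * c)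
  have hcde := map_prod_skew_le (by fun_prop) (by fun_prop) hcd
    fun q ↦ he (144 * a ^ 2 * (q.1 ^ 2 - 3 * b * q.2))
  have hconst : (576 * 124416 * 23887872 : ℝ≥0∞) = ((24 ^ 6 * 8957952 : ℕ) : ℝ≥0∞) := by norm_num
  rw [hconst] at hcde
  exact hcde

/-- The quartic form with coefficients `((a, b), ((c, d), e))`, as a vector. -/
def coeffVec (R : Type*) [AddCommMonoid R] : ((R × R) × ((R × R) × R)) →+ (Fin 5 → R) where
  toFun q := ![q.1.1, q.1.2, q.2.1.1, q.2.1.2, q.2.2]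
  map_zero' := by simp
  map_add' q q' := by simp

lemma measurePreserving_coeffVec : MeasurePreserving (coeffVec ℤ_[p]) := by
  have : (volume : Measure ((ℤ_[p] × ℤ_[p]) × ((ℤ_[p] × ℤ_[p]) × ℤ_[p]))).IsAddHaarMeasure :=
    have : (volume : Measure (ℤ_[p] × ℤ_[p])).IsAddHaarMeasure :=
      Measure.prod.instIsAddHaarMeasure volume volume
    have : (volume : Measure ((ℤ_[p] × ℤ_[p]) × ℤ_[p])).IsAddHaarMeasure :=
      Measure.prod.instIsAddHaarMeasure volume volume
    Measure.prod.instIsAddHaarMeasure volume volume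
  refine AddMonoidHom.measurePreserving ?_ ?_ (by simp only [measure_univ])
  · refine continuous_pi fun i ↦ ?_
    fin_cases i <;> dsimp [coeffVec] <;> fun_prop
  · intro v
    exact ⟨((v 0, v 1), ((v 2, v 3), v 4)), by ext i; fin_cases i <;> rfl⟩

/-- This constant times `(k + 1) * p ^ (-E k / 2)` bounds the density of the forms with
`p ^ (2 * k) ∣ Δ` whose leading coefficient divides `24`: the first two factors come from the
Jacobian of the passage to seminvariants. -/
def seminvariantConst : ℝ := 24 ^ 6 * 8957952 * 1400

variable (p) in
lemma continuous_disc : Continuous fun v : Fin 5 → ℤ_[p] ↦ (ofVec v).disc := by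
  simp only [BQ.disc, ofVec]
  fun_prop

lemma volume_norm_disc_le_of_norm_le {a : ℤ_[p]} (ha : ‖(24 : ℤ_[p])‖ ≤ ‖a‖) (b : ℤ_[p]) (k : ℕ) :
    volume {q : (ℤ_[p] × ℤ_[p]) × ℤ_[p] | ‖(BQ.mk a b q.1.1 q.1.2 q.2).disc‖ ≤ ρ ^ (4 * k)} ≤
      ENNReal.ofReal (seminvariantConst * ((k + 1) * ρ ^ densityExponent k)) := by
  let D : Set ((ℤ_[p] × ℤ_[p]) × ℤ_[p]) := {q | ‖seminvariantDisc q.1.1 q.1.2 q.2‖ ≤ ρ ^ (4 * k)}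
  have hmeas : Measurable (seminvariants a b) := by
    unfold seminvariants
    fun_prop
  calc _ ≤ volume (seminvariants a b ⁻¹' D) := by
        refine measure_mono fun q hq ↦ ?_
        rw [mem_preimage, mem_ofPred_eq, seminvariantDisc_seminvariants]
        exact (norm_le_norm_iff_dvd.2 (dvd_mul_left _ _)).trans hq
    _ ≤ volume.map (seminvariants a b) D := Measure.le_map_apply hmeas.aemeasurable D
    _ ≤ ((24 ^ 6 * 8957952 : ℕ) : ℝ≥0∞) * volume D := map_seminvariants_le ha b D
    _ ≤ ENNReal.ofReal (24 ^ 6 * 8957952 : ℕ) *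
          ENNReal.ofReal (1400 * (k + 1) * ρ ^ densityExponent k) := by
        rw [ENNReal.ofReal_natCast]
        gcongr
        exact volume_seminvariantDisc_le p k
    _ = _ := by
        rw [← ENNReal.ofReal_mul (by positivity), seminvariantConst]
        push_cast
        ring_nf

lemma volume_norm_disc_le_and_norm_le (k : ℕ) :
    volume {v : Fin 5 → ℤ_[p] | ‖(ofVec v).disc‖ ≤ ρ ^ (4 * k) ∧ ‖(24 : ℤ_[p])‖ ≤ ‖v 0‖} ≤
      ENNReal.ofReal (seminvariantConst * ((k + 1) * ρ ^ densityExponent k)) := by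
  have hclosed : IsClosed
      {v : Fin 5 → ℤ_[p] | ‖(ofVec v).disc‖ ≤ ρ ^ (4 * k) ∧ ‖(24 : ℤ_[p])‖ ≤ ‖v 0‖} :=
    (isClosed_le (continuous_disc p).norm continuous_const).inter
      (isClosed_le continuous_const (continuous_apply 0).norm)
  rw [← measurePreserving_coeffVec.measure_preimage hclosed.measurableSet.nullMeasurableSet]
  refine (Measure.prod_apply (measurePreserving_coeffVec.measurable
    hclosed.measurableSet)).trans_le ((lintegral_mono fun ab ↦ ?_).trans_eq
      (lintegral_const _ |>.trans (by rw [measure_univ, mul_one])))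
  by_cases ha : ‖(24 : ℤ_[p])‖ ≤ ‖ab.1‖
  · exact (measure_mono fun q hq ↦ hq.1).trans (volume_norm_disc_le_of_norm_le ha ab.2 k)
  · exact (measure_mono_null (fun q hq ↦ ha hq.2) measure_empty).trans_le zero_le

end ChangeOfVariables

section Coefficients

/-! ### Shears, interpolation and scaling -/

/-- The substitution `f(x, y) ↦ f(x, y + t x)`, on vectors of coefficients. -/
def shear {R : Type*} [CommRing R] (t : R) : (Fin 5 → R) →+ (Fin 5 → R) where
  toFun v :=
    let f := (ofVec v).subst ⟨1, t, 0, 1⟩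
    ![f.a, f.b, f.c, f.d, f.e]
  map_zero' := by ext i; fin_cases i <;> simp [BQ.subst, ofVec]
  map_add' v w := by ext i; fin_cases i <;> simp [BQ.subst, ofVec] <;> ring

section CommRing

variable {R : Type*} [CommRing R]

lemma shear_apply_zero (t : R) (v : Fin 5 → R) : shear t v 0 = (ofVec v).eval 1 t := by
  simp [shear, BQ.subst, BQ.eval]

lemma shear_shear_neg (t : R) (v : Fin 5 → R) : shear t (shear (-t) v) = v := by
  ext i
  fin_cases i <;> simp [shear, BQ.subst, ofVec] <;> ring

lemma disc_shear (t : R) (v : Fin 5 → R) : (ofVec (shear t v)).disc = (ofVec v).disc := by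
  simp only [shear, BQ.subst, ofVec, BQ.disc, AddMonoidHom.coe_mk, ZeroHom.coe_mk, Matrix.cons_val]
  ring

lemma disc_smul (z : R) (v : Fin 5 → R) : (ofVec (z • v)).disc = z ^ 6 * (ofVec v).disc := by
  simp only [ofVec, BQ.disc, Pi.smul_apply, smul_eq_mul]
  ring

/-- The points at which a quartic polynomial is interpolated. The common denominator of the
interpolation formula is `24`. -/
def interpolationNodes : Finset ℤ := {0, 1, -1, 2, -2}

lemma exists_eq_smul_of_forall_dvd_eval [NoZeroDivisors R] (h24 : (24 : R) ≠ 0) {z : R}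
    {v : Fin 5 → R} (h : ∀ t ∈ interpolationNodes, z * 24 ∣ (ofVec v).eval 1 (t : R)) :
    ∃ w, z • w = v := by
  obtain ⟨g₀, h₀⟩ := h 0 (by decide)
  obtain ⟨g₁, h₁⟩ := h 1 (by decide)
  obtain ⟨g₂, h₂⟩ := h (-1) (by decide)
  obtain ⟨g₃, h₃⟩ := h 2 (by decide)
  obtain ⟨g₄, h₄⟩ := h (-2) (by decide)
  simp only [ofVec, BQ.eval] at h₀ h₁ h₂ h₃ h₄
  push_cast at h₀ h₁ h₂ h₃ h₄
  refine ⟨![24 * g₀, 2 * (8 * (g₁ - g₂) - (g₃ - g₄)), 16 * (g₁ + g₂) - (g₃ + g₄) - 30 * g₀,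
    2 * ((g₃ - g₄) - 2 * (g₁ - g₂)), g₃ + g₄ - 4 * g₁ - 4 * g₂ + 6 * g₀], ?_⟩
  ext i
  refine mul_left_cancel₀ h24 ?_
  fin_cases i <;> simp only [Pi.smul_apply, smul_eq_mul] <;> dsimp
  · linear_combination -24 * h₀
  · linear_combination -16 * (h₁ - h₂) + 2 * (h₃ - h₄)
  · linear_combination -16 * (h₁ + h₂) + (h₃ + h₄) + 30 * h₀
  · linear_combination -2 * (h₃ - h₄) + 4 * (h₁ - h₂)
  · linear_combination -h₃ - h₄ + 4 * h₁ + 4 * h₂ - 6 * h₀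

end CommRing

lemma measurePreserving_shear (t : ℤ_[p]) : MeasurePreserving (shear t) := by
  refine AddMonoidHom.measurePreserving ?_ (fun v ↦ ⟨_, shear_shear_neg t v⟩) rfl
  refine continuous_pi fun i ↦ ?_
  fin_cases i <;> simp only [shear, BQ.subst, ofVec, AddMonoidHom.coe_mk, ZeroHom.coe_mk] <;>
    dsimp <;> fun_prop

lemma natCast_mul_dvd_of_norm_lt {x y : ℤ_[p]} (h : ‖x‖ < ‖y‖) : p * y ∣ x := by
  obtain ⟨z, rfl⟩ := norm_le_norm_iff_dvd.1 h.le
  rw [norm_mul] at h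
  have hz : ‖z‖ < 1 := lt_of_mul_lt_mul_left (by rwa [mul_one]) (norm_nonneg y)
  rw [mul_comm]
  exact mul_dvd_mul_left y ((norm_lt_one_iff_dvd z).1 hz)

lemma volume_smul_set {ι : Type*} [Fintype ι] {α : ℤ_[p]} (hα : α ≠ 0) (S : Set (ι → ℤ_[p])) :
    volume (α • S) = ENNReal.ofReal (‖α‖ ^ Fintype.card ι) * volume S := by
  have hrange : range (DistribSMul.toAddMonoidHom (ι → ℤ_[p]) α) =
      univ.pi fun _ ↦ range (AddMonoidHom.mulLeft α) :=
    range_piMap fun _ : ι ↦ AddMonoidHom.mulLeft α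
  refine (measure_image_addMonoidHom volume volume (φ := DistribSMul.toAddMonoidHom _ α)
    (continuous_const_smul α) (smul_right_injective _ hα) S).trans ?_
  rw [hrange, volume_pi_pi, Finset.prod_const, volume_range_mulLeft hα,
    ENNReal.ofReal_pow (norm_nonneg α), Finset.card_univ]

end Coefficients

end PadicIntegers

section Density

/-! ### Descent on the divisibility of the discriminant -/

variable (p : Nat.Primes)

local notation "ρ" => invSqrt p

lemma mem_discDivSet_two_mul {k : ℕ} {v : Fin 5 → ℤ_[(p : ℕ)]} :
    v ∈ discDivSet p (2 * k) ↔ ‖(ofVec v).disc‖ ≤ ρ ^ (4 * k) := by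
  rw [show 4 * k = 2 * (2 * k) by ring, norm_le_invSqrt_pow_iff_dvd]
  rfl

lemma discDivSet_subset (j : ℕ) :
    discDivSet p j ⊆ ((p : ℕ) : ℤ_[(p : ℕ)]) • discDivSet p (j - 6) ∪
      ⋃ t ∈ interpolationNodes, shear (t : ℤ_[(p : ℕ)]) ⁻¹'
        {v | v ∈ discDivSet p j ∧ ‖(24 : ℤ_[(p : ℕ)])‖ ≤ ‖v 0‖} := by
  intro v hv
  by_cases h : ∀ t ∈ interpolationNodes, ‖shear (t : ℤ_[(p : ℕ)]) v 0‖ < ‖(24 : ℤ_[(p : ℕ)])‖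
  · obtain ⟨w, rfl⟩ := exists_eq_smul_of_forall_dvd_eval (by norm_num) fun t ht ↦
      shear_apply_zero (t : ℤ_[(p : ℕ)]) v ▸ natCast_mul_dvd_of_norm_lt (h t ht)
    refine .inl ⟨w, ?_, rfl⟩
    rw [discDivSet, mem_ofPred_eq, disc_smul] at hv
    rcases le_total j 6 with hj | hj
    · simp [discDivSet, Nat.sub_eq_zero_of_le hj]
    · rw [← Nat.add_sub_cancel' hj, pow_add] at hv
      exact (mul_dvd_mul_iff_left (pow_ne_zero 6 (by exact_mod_cast p.2.ne_zero))).1 hv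
  · push Not at h
    obtain ⟨t, ht, hle⟩ := h
    exact .inr (mem_biUnion ht ⟨by rwa [discDivSet, mem_ofPred_eq, disc_shear], hle⟩)

lemma volume_discDivSet_le_add (k : ℕ) :
    volume (discDivSet p (2 * k)) ≤
      ENNReal.ofReal (ρ ^ 10) * volume (discDivSet p (2 * (k - 3))) +
        ENNReal.ofReal (5 * (seminvariantConst * ((k + 1) * ρ ^ densityExponent k))) := by
  have hgood := volume_norm_disc_le_and_norm_le (p := p) k
  simp only [← mem_discDivSet_two_mul] at hgood
  have hp0 : ((p : ℕ) : ℤ_[(p : ℕ)]) ≠ 0 := by exact_mod_cast p.2.ne_zero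
  refine (measure_mono (discDivSet_subset p (2 * k))).trans ((measure_union_le _ _).trans ?_)
  refine add_le_add (le_of_eq ?_) ((measure_biUnion_finset_le _ _).trans ?_)
  · rw [volume_smul_set hp0, ← pow_one ((p : ℕ) : ℤ_[(p : ℕ)]), norm_natCast_pow, ← pow_mul,
      Nat.mul_sub]
    rfl
  · refine (Finset.sum_le_card_nsmul _ _ _ fun t _ ↦
      ((measurePreserving_shear _).measure_preimage_le _).trans hgood).trans_eq ?_
    rw [← ENNReal.ofReal_nsmul, nsmul_eq_mul]
    rfl

/-- The absolute constant in the bound for the density of the forms with `p ^ (2 * k) ∣ Δ`. The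
factor `4` sums the descent, each step of which gains at least a factor `3 / 4`. -/
def densityConst : ℝ := 4 * (1 + 5 * seminvariantConst)

lemma seminvariantConst_pos : 0 < seminvariantConst := by
  unfold seminvariantConst
  positivity

lemma densityConst_pos : 0 < densityConst := by
  have := seminvariantConst_pos
  unfold densityConst
  positivity

lemma ofReal_mul_volume_discDivSet_sub_three_le (k : ℕ)
    (ih : ∀ m < k, volume (discDivSet p (2 * m)) ≤
      ENNReal.ofReal (densityConst * ((m + 1) * ρ ^ densityExponent m))) :
    ENNReal.ofReal (ρ ^ 10) * volume (discDivSet p (2 * (k - 3))) ≤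
      ENNReal.ofReal ((3 / 4 * densityConst + 1) * ((k + 1) * ρ ^ densityExponent k)) := by
  have hρ := invSqrt_pos p
  have hC := densityConst_pos
  rcases lt_or_ge k 3 with hk | hk
  · refine (mul_le_of_le_one_right' prob_le_one).trans (ENNReal.ofReal_le_ofReal ?_)
    have hexp : densityExponent k ≤ 10 := by
      unfold densityExponent
      split_ifs <;> omega
    calc ρ ^ 10 ≤ 1 * (1 * ρ ^ densityExponent k) := by
          rwa [one_mul, one_mul, invSqrt_pow_le_pow_iff]
      _ ≤ _ := by
          gcongr
          · linarith
          · linarith [(k.cast_nonneg : (0 : ℝ) ≤ k)]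
  · obtain ⟨m, rfl⟩ := Nat.exists_eq_add_of_le' hk
    have hexp : densityExponent (m + 3) + 1 ≤ 10 + densityExponent m := by
      unfold densityExponent
      split_ifs <;> omega
    have hpow : ρ ^ (10 + densityExponent m) ≤ 3 / 4 * ρ ^ densityExponent (m + 3) := by
      refine (invSqrt_pow_le_pow_iff.2 hexp).trans ?_
      rw [pow_succ']
      gcongr
      exact invSqrt_le p
    refine (mul_le_mul_right (ih m (by omega)) _).trans ?_
    rw [← ENNReal.ofReal_mul (by positivity)]
    refine ENNReal.ofReal_le_ofReal ?_
    calc ρ ^ 10 * (densityConst * ((m + 1) * ρ ^ densityExponent m))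
        = densityConst * ((m + 1) * ρ ^ (10 + densityExponent m)) := by ring
      _ ≤ densityConst * (((m + 3 : ℕ) + 1) * (3 / 4 * ρ ^ densityExponent (m + 3))) := by
          gcongr
          omega
      _ = 3 / 4 * densityConst * (((m + 3 : ℕ) + 1) * ρ ^ densityExponent (m + 3)) := by ring
      _ ≤ _ := by
          gcongr
          linarith

lemma volume_discDivSet_le (k : ℕ) :
    volume (discDivSet p (2 * k)) ≤
      ENNReal.ofReal (densityConst * ((k + 1) * ρ ^ densityExponent k)) := by
  have hρ := invSqrt_pos p
  have hK := seminvariantConst_pos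
  have hC := densityConst_pos
  induction k using Nat.strong_induction_on with
  | _ k ih =>
    refine (volume_discDivSet_le_add p k).trans
      ((add_le_add_left (ofReal_mul_volume_discDivSet_sub_three_le p k ih) _).trans_eq ?_)
    rw [← ENNReal.ofReal_add (by positivity) (by positivity)]
    congr 1
    unfold densityConst
    ring

lemma volume_discDivSet_le_rpow {k : ℕ} {s : ℝ} (hs : densityExponent k / 2 = s) :
    volume (discDivSet p (2 * k)) ≤
      ENNReal.ofReal (densityConst * (k + 1) * ((p : ℕ) : ℝ) ^ (-s)) := by
  rw [← hs, rpow_neg_half_natCast, mul_assoc]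
  exact volume_discDivSet_le p k

end Density

/-- For the Haar probability measure `ν` on `V(ℤ_p) ≅ ℤ_p⁵` (here:
any translation-invariant Borel probability measure), the density of forms with
`p² ∣ Δ` is `O(p⁻²)`, with `p⁴ ∣ Δ` it is `O(p⁻⁴)`, and for `k ≥ 3` the density of
forms with `p^{2k} ∣ Δ` is `O(k p^{−3k/2})`, with absolute implied constants. -/
theorem disc_divisibility_density :
    ∃ C : ℝ, 0 < C ∧ ∀ (p : Nat.Primes) (ν : Measure (Fin 5 → ℤ_[(p : ℕ)])),
      IsProbabilityMeasure ν → (∀ t : Fin 5 → ℤ_[(p : ℕ)], ν.map (fun x => t + x) = ν) →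
      ν (discDivSet p 2) ≤ ENNReal.ofReal (C * ((p : ℕ) : ℝ) ^ (-2 : ℝ)) ∧
      ν (discDivSet p 4) ≤ ENNReal.ofReal (C * ((p : ℕ) : ℝ) ^ (-4 : ℝ)) ∧
      ∀ k : ℕ, 3 ≤ k →
        ν (discDivSet p (2 * k))
          ≤ ENNReal.ofReal (C * k * ((p : ℕ) : ℝ) ^ (-(3 * (k : ℝ) / 2))) := by
  have hC := densityConst_pos
  refine ⟨densityConst * 3, by positivity, fun p ν hν hinv ↦ ?_⟩
  have : ν.IsAddLeftInvariant := ⟨hinv⟩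
  rw [eq_of_isAddLeftInvariant_of_isProbabilityMeasure ν volume]
  refine ⟨?_, ?_, fun k hk ↦ ?_⟩
  · refine (volume_discDivSet_le_rpow p (k := 1) (s := 2) (by norm_num [densityExponent])).trans ?_
    gcongr
    norm_num
  · refine (volume_discDivSet_le_rpow p (k := 2) (s := 4) (by norm_num [densityExponent])).trans ?_
    gcongr
    norm_num
  · have hexp : densityExponent k = 3 * k := by
      unfold densityExponent
      split_ifs <;> omega
    refine (volume_discDivSet_le_rpow p (s := 3 * k / 2) (by rw [hexp]; push_cast; rfl)).trans ?_
    have hk3 : (3 : ℝ) ≤ k := by exact_mod_cast hk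
    rw [mul_assoc densityConst 3]
    gcongr
    linarith

end BQPaper
end
end
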